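/- arXiv:2301.02473 — 19 statements merged into one kernel-verified Lean document; each statement's English description precedes it below -/
import Mathlib

section
/- Let k, c₊, c₋, c₀ be real constants. Suppose x, y : ℝ → ℝ are twice differentiable and satisfy the Newtonian equations of motion for the Toda-type potential V(x,y) = c₊·exp(k(y+√3·x)) + c₋·exp(k(y−√3·x)) + c₀·exp(−2ky), i.e. x''(t) = −∂V/∂x and y''(t) = −∂V/∂y along the solution. Then the cubic function J(t) = x'(t)³ − 3x'(t)y'(t)² + 3[c₊·exp(k(y+√3x)) + c₋·exp(k(y−√3x)) − 2c₀·exp(−2ky)]·x'(t) − 3√3[c₊·exp(k(y+√3x)) − c₋·exp(k(y−√3x))]·y'(t) (evaluated at (x(t),y(t))) is constant in t. -/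
/-- Toda-type potential: the cubic expression is a first integral. -/
theorem stmt_0 (k cp cm c0 : ℝ) (x y x' y' x'' y'' : ℝ → ℝ) (V : ℝ → ℝ → ℝ) (J : ℝ → ℝ)
    (hV : ∀ a b : ℝ, V a b =
      cp * Real.exp (k * (b + Real.sqrt 3 * a)) +
      cm * Real.exp (k * (b - Real.sqrt 3 * a)) +
      c0 * Real.exp (-2 * k * b))
    (hx : ∀ t, HasDerivAt x (x' t) t)
    (hy : ∀ t, HasDerivAt y (y' t) t)
    (hx' : ∀ t, HasDerivAt x' (x'' t) t)
    (hy' : ∀ t, HasDerivAt y' (y'' t) t)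
    (heqx : ∀ t, x'' t = - deriv (fun a => V a (y t)) (x t))
    (heqy : ∀ t, y'' t = - deriv (fun b => V (x t) b) (y t))
    (hJ : ∀ t, J t =
      x' t ^ 3 - 3 * x' t * y' t ^ 2 +
      3 * (cp * Real.exp (k * (y t + Real.sqrt 3 * x t)) +
           cm * Real.exp (k * (y t - Real.sqrt 3 * x t)) -
           2 * c0 * Real.exp (-2 * k * y t)) * x' t -
      3 * Real.sqrt 3 * (cp * Real.exp (k * (y t + Real.sqrt 3 * x t)) -
           cm * Real.exp (k * (y t - Real.sqrt 3 * x t))) * y' t) :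
    ∀ t₁ t₂ : ℝ, J t₁ = J t₂ := by
  have hs : Real.sqrt 3 * Real.sqrt 3 = 3 := Real.mul_self_sqrt (by norm_num)
  have hJ' : J = _ := funext hJ
  have ax : ∀ t, x'' t = -(cp * (Real.exp (k * (y t + Real.sqrt 3 * x t)) * (k * (Real.sqrt 3))) -
      cm * (Real.exp (k * (y t - Real.sqrt 3 * x t)) * (k * (Real.sqrt 3)))) := by
    intro t
    rw [heqx t]
    have h1 := (((((hasDerivAt_id (x t)).const_mul (Real.sqrt 3)).const_add (y t)).const_mul
      k).exp).const_mul cp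
    have h2 := (((((hasDerivAt_id (x t)).const_mul (Real.sqrt 3)).const_sub (y t)).const_mul
      k).exp).const_mul cm
    have h3 := (h1.add h2).add_const (c0 * Real.exp (-2 * k * y t))
    have h4 : (fun a => V a (y t)) = _ := funext fun a => hV a (y t)
    rw [h4]
    erw [HasDerivAt.deriv h3]
    simp only [id]
    ring
  have ay : ∀ t, y'' t = -(cp * (Real.exp (k * (y t + Real.sqrt 3 * x t)) * k) +
      cm * (Real.exp (k * (y t - Real.sqrt 3 * x t)) * k) +
      c0 * (Real.exp (-2 * k * y t) * (-2 * k))) := by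
    intro t
    rw [heqy t]
    have h1 := ((((hasDerivAt_id (y t)).add_const (Real.sqrt 3 * x t)).const_mul
      k).exp).const_mul cp
    have h2 := ((((hasDerivAt_id (y t)).sub_const (Real.sqrt 3 * x t)).const_mul
      k).exp).const_mul cm
    have h0 := (((hasDerivAt_id (y t)).const_mul (-2 * k)).exp).const_mul c0
    have h3 := (h1.add h2).add h0
    have h4 : (fun b => V (x t) b) = _ := funext fun b => hV (x t) b
    rw [h4]
    erw [HasDerivAt.deriv h3]
    simp only [id]
    ring
  have key : ∀ t, HasDerivAt J 0 t := by
    intro t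
    have hP := ((((hy t).add ((hx t).const_mul (Real.sqrt 3))).const_mul k).exp).const_mul cp
    have hM := ((((hy t).sub ((hx t).const_mul (Real.sqrt 3))).const_mul k).exp).const_mul cm
    have hZ := (((hy t).const_mul (-2 * k)).exp).const_mul (2 * c0)
    have h := ((((hx' t).pow 3).sub (((hx' t).const_mul 3).mul ((hy' t).pow 2))).add
      ((((hP.add hM).sub hZ).const_mul 3).mul (hx' t))).sub
      (((hP.sub hM).const_mul (3 * Real.sqrt 3)).mul (hy' t))
    rw [hJ']
    refine HasDerivAt.congr_deriv h ?_
    simp only [Pi.add_apply, Pi.sub_apply, Pi.mul_apply, Pi.pow_apply]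
    rw [ax t, ay t]
    push_cast
    generalize Real.exp (k * (y t + Real.sqrt 3 * x t)) = P
    generalize Real.exp (k * (y t - Real.sqrt 3 * x t)) = M
    generalize Real.exp (-2 * k * y t) = Z
    generalize Real.sqrt 3 = s at hs
    linear_combination (-3 * k * x' t * y' t * (cp * P + cm * M)) * hs
  exact is_const_of_deriv_eq_zero (fun t => (key t).differentiableAt) (fun t => (key t).deriv)
end

section
/- Let F₁, F₂, F₃ : ℝ → ℝ be differentiable functions satisfying the cyclic condition F₁'(w₁)·(F₂(w₂) − F₃(w₃)) + F₂'(w₂)·(F₃(w₃) − F₁(w₁)) + F₃'(w₃)·(F₁(w₁) − F₂(w₂)) = 0 for all (x,y) ∈ ℝ², where w₁ = y + √3·x, w₂ = y − √3·x, w₃ = −2y. Suppose x, y : ℝ → ℝ are twice differentiable and satisfy the Newtonian equations of motion for the potential V(x,y) = F₁(y+√3x) + F₂(y−√3x) + F₃(−2y). Then the cubic function J(t) = x'³ − 3x'y'² + 3[F₁(y+√3x) + F₂(y−√3x) − 2F₃(−2y)]·x' − 3√3[F₁(y+√3x) − F₂(y−√3x)]·y' is constant in t. -/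
/-- General three-particle Toda-type potential with the cyclic condition:
the cubic expression is a first integral. -/
theorem stmt_1 (F₁ F₂ F₃ F₁' F₂' F₃' : ℝ → ℝ)
    (hF₁ : ∀ w, HasDerivAt F₁ (F₁' w) w)
    (hF₂ : ∀ w, HasDerivAt F₂ (F₂' w) w)
    (hF₃ : ∀ w, HasDerivAt F₃ (F₃' w) w)
    (hcyc : ∀ a b : ℝ,
      F₁' (b + Real.sqrt 3 * a) * (F₂ (b - Real.sqrt 3 * a) - F₃ (-2 * b)) +
      F₂' (b - Real.sqrt 3 * a) * (F₃ (-2 * b) - F₁ (b + Real.sqrt 3 * a)) +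
      F₃' (-2 * b) * (F₁ (b + Real.sqrt 3 * a) - F₂ (b - Real.sqrt 3 * a)) = 0)
    (x y x' y' x'' y'' : ℝ → ℝ) (V : ℝ → ℝ → ℝ) (J : ℝ → ℝ)
    (hV : ∀ a b : ℝ, V a b =
      F₁ (b + Real.sqrt 3 * a) + F₂ (b - Real.sqrt 3 * a) + F₃ (-2 * b))
    (hx : ∀ t, HasDerivAt x (x' t) t)
    (hy : ∀ t, HasDerivAt y (y' t) t)
    (hx' : ∀ t, HasDerivAt x' (x'' t) t)
    (hy' : ∀ t, HasDerivAt y' (y'' t) t)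
    (heqx : ∀ t, x'' t = - deriv (fun a => V a (y t)) (x t))
    (heqy : ∀ t, y'' t = - deriv (fun b => V (x t) b) (y t))
    (hJ : ∀ t, J t =
      x' t ^ 3 - 3 * x' t * y' t ^ 2 +
      3 * (F₁ (y t + Real.sqrt 3 * x t) + F₂ (y t - Real.sqrt 3 * x t) -
           2 * F₃ (-2 * y t)) * x' t -
      3 * Real.sqrt 3 * (F₁ (y t + Real.sqrt 3 * x t) -
           F₂ (y t - Real.sqrt 3 * x t)) * y' t) :
    ∀ t₁ t₂ : ℝ, J t₁ = J t₂ := by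
  have hs : Real.sqrt 3 * Real.sqrt 3 = 3 := Real.mul_self_sqrt (by norm_num)
  set s := Real.sqrt 3 with hsdef
  have hVe : V = fun a b => F₁ (b + s * a) + F₂ (b - s * a) + F₃ (-2 * b) := by
    funext a b; exact hV a b
  have hJe : J = fun t => x' t ^ 3 - 3 * x' t * y' t ^ 2 +
      3 * (F₁ (y t + s * x t) + F₂ (y t - s * x t) - 2 * F₃ (-2 * y t)) * x' t -
      3 * s * (F₁ (y t + s * x t) - F₂ (y t - s * x t)) * y' t := by
    funext t; exact hJ t
  have hD : ∀ t, HasDerivAt J 0 t := by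
    intro t
    have ex : x'' t = -(s * (F₁' (y t + s * x t) - F₂' (y t - s * x t))) := by
      rw [heqx t, hVe]
      have h1 : HasDerivAt (fun a => F₁ (y t + s * a)) (F₁' (y t + s * x t) * (s * 1)) (x t) :=
        (hF₁ _).comp (x t) (((hasDerivAt_id (x t)).const_mul s).const_add (y t))
      have h2 : HasDerivAt (fun a => F₂ (y t - s * a)) (F₂' (y t - s * x t) * (-(s * 1))) (x t) :=
        (hF₂ _).comp (x t) (((hasDerivAt_id (x t)).const_mul s).const_sub (y t))
      have h := ((h1.add h2).add_const (F₃ (-2 * y t))).deriv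
      refine (congrArg Neg.neg h).trans ?_
      ring
    have ey : y'' t = -(F₁' (y t + s * x t) + F₂' (y t - s * x t) - 2 * F₃' (-2 * y t)) := by
      rw [heqy t, hVe]
      have h1 : HasDerivAt (fun b => F₁ (b + s * x t)) (F₁' (y t + s * x t) * 1) (y t) :=
        (hF₁ (y t + s * x t)).comp (y t) ((hasDerivAt_id (y t)).add_const (s * x t))
      have h2 : HasDerivAt (fun b => F₂ (b - s * x t)) (F₂' (y t - s * x t) * 1) (y t) :=
        (hF₂ (y t - s * x t)).comp (y t) ((hasDerivAt_id (y t)).sub_const (s * x t))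
      have h3 : HasDerivAt (fun b => F₃ (-2 * b)) (F₃' (-2 * y t) * (-2 * 1)) (y t) :=
        (hF₃ (-2 * y t)).comp (y t) ((hasDerivAt_id (y t)).const_mul (-2))
      have h := ((h1.add h2).add h3).deriv
      refine (congrArg Neg.neg h).trans ?_
      ring
    have g1 : HasDerivAt (fun t => F₁ (y t + s * x t))
        (F₁' (y t + s * x t) * (y' t + s * x' t)) t :=
      (hF₁ (y t + s * x t)).comp t ((hy t).add ((hx t).const_mul s))
    have g2 : HasDerivAt (fun t => F₂ (y t - s * x t))
        (F₂' (y t - s * x t) * (y' t - s * x' t)) t :=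
      (hF₂ (y t - s * x t)).comp t ((hy t).sub ((hx t).const_mul s))
    have g3 : HasDerivAt (fun t => F₃ (-2 * y t)) (F₃' (-2 * y t) * (-2 * y' t)) t :=
      (hF₃ (-2 * y t)).comp t ((hy t).const_mul (-2))
    have g := ((((hx' t).pow 3).sub (((hx' t).const_mul 3).mul ((hy' t).pow 2))).add
      ((((g1.add g2).sub (g3.const_mul 2)).const_mul 3).mul (hx' t))).sub
      (((g1.sub g2).const_mul (3 * s)).mul (hy' t))
    rw [hJe]
    refine HasDerivAt.congr_deriv g ?_
    have hc := hcyc (x t) (y t)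
    simp only [Pi.add_apply, Pi.sub_apply, Pi.pow_apply, Pi.mul_apply]
    rw [ex, ey]
    push_cast
    linear_combination (-6 * s) * hc -
      3 * (F₁' (y t + s * x t) + F₂' (y t - s * x t)) * x' t * y' t * hs
  intro t₁ t₂
  exact is_const_of_deriv_eq_zero (fun t => (hD t).differentiableAt) (fun t => (hD t).deriv) t₁ t₂
end

section
/- Let c₁, c₂, c₃ be real constants. Suppose x, y : ℝ → ℝ are twice differentiable with y(t) > 0 for all t, and satisfy the Newtonian equations of motion for the potential V(x,y) = ((4/3)c₁x² + c₂x + c₃)·y^{−2/3} + c₁·y^{4/3}. Then the cubic function J(t) = x'³ + (3/2)x'y'² + [(4c₁x² + 3c₂x + 3c₃)·y^{−2/3} − 6c₁·y^{4/3}]·x' + (12c₁x + (9/2)c₂)·y^{1/3}·y' is constant in t. -/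
/-- Holt-type potential: the cubic expression is a first integral. -/
theorem stmt_2 (c₁ c₂ c₃ : ℝ) (x y x' y' x'' y'' : ℝ → ℝ) (V : ℝ → ℝ → ℝ) (J : ℝ → ℝ)
    (hV : ∀ a b : ℝ, V a b =
      ((4 / 3) * c₁ * a ^ 2 + c₂ * a + c₃) * b ^ (-(2 : ℝ) / 3) + c₁ * b ^ ((4 : ℝ) / 3))
    (hx : ∀ t, HasDerivAt x (x' t) t)
    (hy : ∀ t, HasDerivAt y (y' t) t)
    (hx' : ∀ t, HasDerivAt x' (x'' t) t)
    (hy' : ∀ t, HasDerivAt y' (y'' t) t)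
    (hypos : ∀ t, 0 < y t)
    (heqx : ∀ t, x'' t = - deriv (fun a => V a (y t)) (x t))
    (heqy : ∀ t, y'' t = - deriv (fun b => V (x t) b) (y t))
    (hJ : ∀ t, J t =
      x' t ^ 3 + (3 / 2) * x' t * y' t ^ 2 +
      ((4 * c₁ * x t ^ 2 + 3 * c₂ * x t + 3 * c₃) * y t ^ (-(2 : ℝ) / 3) -
        6 * c₁ * y t ^ ((4 : ℝ) / 3)) * x' t +
      (12 * c₁ * x t + (9 / 2) * c₂) * y t ^ ((1 : ℝ) / 3) * y' t) :
    ∀ t₁ t₂ : ℝ, J t₁ = J t₂ := by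
  have key : ∀ t, HasDerivAt J 0 t := by
    intro t
    have hp := hypos t
    have hR : ∀ r : ℝ, HasDerivAt (fun b : ℝ => b ^ r) (r * y t ^ (r - 1)) (y t) := fun r =>
      Real.hasDerivAt_rpow_const (Or.inl hp.ne')
    have hY : ∀ r : ℝ, HasDerivAt (fun s => y s ^ r) (r * y t ^ (r - 1) * y' t) t := fun r =>
      (hR r).comp t (hy t)
    have hVx : HasDerivAt (fun a => V a (y t))
        (((8 / 3) * c₁ * x t + c₂) * y t ^ (-(2 : ℝ) / 3)) (x t) := by
      have h1 : (fun a => V a (y t)) = fun a => ((4 / 3) * c₁ * a ^ 2 + c₂ * a + c₃)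
          * y t ^ (-(2 : ℝ) / 3) + c₁ * y t ^ ((4 : ℝ) / 3) := funext fun a => hV a _
      rw [h1]
      have hid := hasDerivAt_id (x t)
      have h2 := ((((hid.pow 2).const_mul ((4 / 3) * c₁)).add
        (hid.const_mul c₂)).add_const c₃).mul_const (y t ^ (-(2 : ℝ) / 3))
      have h3 := h2.add_const (c₁ * y t ^ ((4 : ℝ) / 3))
      refine h3.congr_deriv ?_
      simp only [id_eq, Nat.cast_ofNat]
      ring
    have hVy : HasDerivAt (fun b => V (x t) b)
        (((4 / 3) * c₁ * x t ^ 2 + c₂ * x t + c₃) *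
          ((-(2 : ℝ) / 3) * y t ^ (-(2 : ℝ) / 3 - 1))
          + c₁ * ((4 : ℝ) / 3 * y t ^ ((4 : ℝ) / 3 - 1))) (y t) := by
      have h1 : (fun b => V (x t) b) = fun b => ((4 / 3) * c₁ * x t ^ 2 + c₂ * x t + c₃)
          * b ^ (-(2 : ℝ) / 3) + c₁ * b ^ ((4 : ℝ) / 3) := funext fun b => hV _ b
      rw [h1]
      exact ((hR _).const_mul _).add ((hR _).const_mul _)
    have ex := heqx t
    have ey := heqy t
    rw [hVx.deriv] at ex
    rw [hVy.deriv] at ey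
    have hJ' : J = fun t => x' t ^ 3 + (3 / 2) * x' t * y' t ^ 2 +
      ((4 * c₁ * x t ^ 2 + 3 * c₂ * x t + 3 * c₃) * y t ^ (-(2 : ℝ) / 3) -
        6 * c₁ * y t ^ ((4 : ℝ) / 3)) * x' t +
      (12 * c₁ * x t + (9 / 2) * c₂) * y t ^ ((1 : ℝ) / 3) * y' t := funext hJ
    rw [hJ']
    have d1 := (hx' t).pow 3
    have d2 := ((hx' t).const_mul (3 / 2)).mul ((hy' t).pow 2)
    have d3 := (((((hx t).pow 2).const_mul (4 * c₁)).add
      ((hx t).const_mul (3 * c₂))).add_const (3 * c₃)).mul (hY (-(2 : ℝ) / 3))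
    have d4 := (d3.sub ((hY ((4 : ℝ) / 3)).const_mul (6 * c₁))).mul (hx' t)
    have d5 := ((((hx t).const_mul (12 * c₁)).add_const ((9 / 2) * c₂)).mul
      (hY ((1 : ℝ) / 3))).mul (hy' t)
    refine (((d1.add d2).add d4).add d5).congr_deriv ?_
    obtain ⟨u, hu⟩ : ∃ u, u = y t ^ ((1 : ℝ) / 3) := ⟨_, rfl⟩
    have hu0 : u ≠ 0 := by rw [hu]; positivity
    have hz : ∀ (n : ℤ) (r : ℝ), r = 1 / 3 * n → y t ^ r = u ^ n := by
      intro n r hr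
      rw [hr, hu, Real.rpow_mul hp.le, Real.rpow_intCast]
    have e1 := hz (-2) (-(2 : ℝ) / 3) (by norm_num)
    have e2 := hz (-5) (-(2 : ℝ) / 3 - 1) (by norm_num)
    have e3 := hz 4 ((4 : ℝ) / 3) (by norm_num)
    have e4 := hz 1 ((4 : ℝ) / 3 - 1) (by norm_num)
    have e5 := hz 1 ((1 : ℝ) / 3) (by norm_num)
    have e6 := hz (-2) ((1 : ℝ) / 3 - 1) (by norm_num)
    rw [e1] at ex
    rw [e2, e4] at ey
    simp only [Pi.add_apply, Pi.mul_apply, Pi.pow_apply, Pi.sub_apply, e1, e2, e3, e4, e5, e6,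
      ex, ey]
    field_simp
    ring
  exact is_const_of_deriv_eq_zero (fun t => (key t).differentiableAt) fun t => (key t).deriv
end

section
/- Let c₁, c₂, c₃ be real constants. Suppose x, y : ℝ → ℝ are twice differentiable with x(t) ≠ 0 for all t, and satisfy the Newtonian equations of motion for the potential V(x,y) = c₁x² + c₂/x² + 4c₁y² + c₃y. Then the cubic function J(t) = x'²y' + x(8c₁y + c₃)·x' − 2(c₁x² − c₂/x²)·y' is constant in t. -/
theorem stmt_3 (c₁ c₂ c₃ : ℝ) (x y x' y' x'' y'' : ℝ → ℝ) (V : ℝ → ℝ → ℝ) (J : ℝ → ℝ)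
    (hV : ∀ a b : ℝ, V a b = c₁ * a ^ 2 + c₂ / a ^ 2 + 4 * c₁ * b ^ 2 + c₃ * b)
    (hx : ∀ t, HasDerivAt x (x' t) t)
    (hy : ∀ t, HasDerivAt y (y' t) t)
    (hx' : ∀ t, HasDerivAt x' (x'' t) t)
    (hy' : ∀ t, HasDerivAt y' (y'' t) t)
    (hxne : ∀ t, x t ≠ 0)
    (heqx : ∀ t, x'' t = - deriv (fun a => V a (y t)) (x t))
    (heqy : ∀ t, y'' t = - deriv (fun b => V (x t) b) (y t))
    (hJ : ∀ t, J t =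
      x' t ^ 2 * y' t + x t * (8 * c₁ * y t + c₃) * x' t -
      2 * (c₁ * x t ^ 2 - c₂ / x t ^ 2) * y' t) :
    ∀ t₁ t₂ : ℝ, J t₁ = J t₂ := by
  have h1 : ∀ t, x'' t = -(2 * c₁ * x t - 2 * c₂ / x t ^ 3) := by
    intro t
    rw [heqx t]
    congr 1
    have hx0 := hxne t
    have hid := hasDerivAt_id' (x t)
    have h := ((((hid.pow 2).const_mul c₁).add
      ((hasDerivAt_const (x t) c₂).div (hid.pow 2) (pow_ne_zero 2 hx0))).add_const
        (4 * c₁ * y t ^ 2)).add_const (c₃ * y t)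
    have hf : (fun a => V a (y t)) =
        fun a => c₁ * a ^ 2 + c₂ / a ^ 2 + 4 * c₁ * y t ^ 2 + c₃ * y t := by
      funext a
      exact hV a (y t)
    rw [hf]
    refine HasDerivAt.deriv (HasDerivAt.congr_deriv h ?_)
    simp
    field_simp
    ring
  have h2 : ∀ t, y'' t = -(8 * c₁ * y t + c₃) := by
    intro t
    rw [heqy t]
    congr 1
    have hid := hasDerivAt_id' (y t)
    have h := (((hid.pow 2).const_mul (4 * c₁)).const_add
      (c₁ * x t ^ 2 + c₂ / x t ^ 2)).add (hid.const_mul c₃)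
    have hf : (fun b => V (x t) b) =
        fun b => c₁ * x t ^ 2 + c₂ / x t ^ 2 + 4 * c₁ * b ^ 2 + c₃ * b := by
      funext b
      exact hV (x t) b
    rw [hf]
    refine HasDerivAt.deriv (HasDerivAt.congr_deriv h ?_)
    simp
    ring
  have hd : ∀ t, HasDerivAt J 0 t := by
    intro t
    have hx0 := hxne t
    have h := ((((hx' t).pow 2).mul (hy' t)).add
      (((hx t).mul (((hy t).const_mul (8 * c₁)).add_const c₃)).mul (hx' t))).sub
      ((((((hx t).pow 2).const_mul c₁).sub
        ((hasDerivAt_const t c₂).div ((hx t).pow 2) (pow_ne_zero 2 hx0))).const_mul 2).mul (hy' t))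
    rw [funext hJ]
    refine HasDerivAt.congr_deriv h ?_
    simp [h1 t, h2 t]
    field_simp
    ring
  exact is_const_of_deriv_eq_zero (fun t => (hd t).differentiableAt) (fun t => (hd t).deriv)
end

section
/- Let F : ℝ → ℝ be differentiable. Suppose x, y : ℝ → ℝ are twice differentiable and satisfy the Newtonian equations of motion for the potential V(x,y) = F(x+y), i.e. x'' = −F'(x+y) and y'' = −F'(x+y) along the solution. Then the cubic function J(t) = x'³ − y'³ + 3·F(x+y)·(x' − y') is constant in t. -/
theorem stmt_4 (F F' : ℝ → ℝ)
    (hF : ∀ w, HasDerivAt F (F' w) w)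
    (x y x' y' x'' y'' : ℝ → ℝ) (J : ℝ → ℝ)
    (hx : ∀ t, HasDerivAt x (x' t) t)
    (hy : ∀ t, HasDerivAt y (y' t) t)
    (hx' : ∀ t, HasDerivAt x' (x'' t) t)
    (hy' : ∀ t, HasDerivAt y' (y'' t) t)
    (heqx : ∀ t, x'' t = - F' (x t + y t))
    (heqy : ∀ t, y'' t = - F' (x t + y t))
    (hJ : ∀ t, J t =
      x' t ^ 3 - y' t ^ 3 + 3 * F (x t + y t) * (x' t - y' t)) :
    ∀ t₁ t₂ : ℝ, J t₁ = J t₂ := by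
  have key : ∀ t, HasDerivAt J 0 t := by
    intro t
    have hJ' : J = fun t => x' t ^ 3 - y' t ^ 3 + 3 * F (x t + y t) * (x' t - y' t) :=
      funext hJ
    have hFc : HasDerivAt (fun t => F (x t + y t)) (F' (x t + y t) * (x' t + y' t)) t :=
      HasDerivAt.comp t (hF (x t + y t)) ((hx t).add (hy t))
    have h := (((hx' t).fun_pow 3).fun_sub ((hy' t).fun_pow 3)).fun_add
      ((hFc.const_mul 3).fun_mul ((hx' t).fun_sub (hy' t)))
    rw [hJ']
    refine h.congr_deriv ?_
    rw [heqx, heqy]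
    push_cast
    ring
  exact is_const_of_deriv_eq_zero (fun t => (key t).differentiableAt) (fun t => (key t).deriv)
end

section
/- Let c₁, c₂ be real constants. Suppose x, y : ℝ → ℝ are twice differentiable with x(t) > 0 for all t, and satisfy the Newtonian equations of motion for the potential V(x,y) = c₁·√x + c₂·y. Then the cubic function J(t) = c₂·x'³ + 3c₁c₂·√x·x' − (3/2)c₁²·y' is constant in t. -/
theorem stmt_5 (c₁ c₂ : ℝ) (x y x' y' x'' y'' : ℝ → ℝ) (V : ℝ → ℝ → ℝ) (J : ℝ → ℝ)
    (hV : ∀ a b : ℝ, V a b = c₁ * Real.sqrt a + c₂ * b)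
    (hx : ∀ t, HasDerivAt x (x' t) t)
    (hy : ∀ t, HasDerivAt y (y' t) t)
    (hx' : ∀ t, HasDerivAt x' (x'' t) t)
    (hy' : ∀ t, HasDerivAt y' (y'' t) t)
    (hxpos : ∀ t, 0 < x t)
    (heqx : ∀ t, x'' t = - deriv (fun a => V a (y t)) (x t))
    (heqy : ∀ t, y'' t = - deriv (fun b => V (x t) b) (y t))
    (hJ : ∀ t, J t =
      c₂ * x' t ^ 3 + 3 * c₁ * c₂ * Real.sqrt (x t) * x' t - (3 / 2) * c₁ ^ 2 * y' t) :
    ∀ t₁ t₂ : ℝ, J t₁ = J t₂ := by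
  have hX : ∀ t, x'' t = -(c₁ * (1 / (2 * Real.sqrt (x t)))) := by
    intro t
    rw [heqx t]
    simp only [hV]
    rw [(((Real.hasDerivAt_sqrt (hxpos t).ne').const_mul c₁).add_const (c₂ * y t)).deriv]
  have hY : ∀ t, y'' t = -c₂ := by
    intro t
    rw [heqy t]
    simp only [hV]
    rw [(((hasDerivAt_id' (y t)).const_mul c₂).const_add (c₁ * Real.sqrt (x t))).deriv, mul_one]
  have hD : ∀ t, HasDerivAt J 0 t := by
    intro t
    have hs : 0 < Real.sqrt (x t) := Real.sqrt_pos.mpr (hxpos t)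
    have h1 := ((hx' t).pow 3).const_mul c₂
    have h2 := (((hx t).sqrt (hxpos t).ne').const_mul (3 * c₁ * c₂)).mul (hx' t)
    have h3 := (hy' t).const_mul ((3 / 2) * c₁ ^ 2)
    have h := (h1.add h2).sub h3
    have hJf : J = fun t => c₂ * x' t ^ 3 + 3 * c₁ * c₂ * Real.sqrt (x t) * x' t
        - (3 / 2) * c₁ ^ 2 * y' t := funext hJ
    rw [hJf]
    refine HasDerivAt.congr_deriv h ?_
    rw [hX t, hY t]
    field_simp
    push_cast
    ring
  exact is_const_of_deriv_eq_zero (fun t => (hD t).differentiableAt) (fun t => (hD t).deriv)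
end

section
/- Let k be a real constant. Suppose x, y : ℝ → ℝ are twice differentiable with x(t) > 0 and y(t) > 0 for all t, and satisfy the Newtonian equations of motion for the potential V(x,y) = k(√x + √y). Then the cubic function J(t) = x'³ − y'³ + 3k(√x·x' − √y·y') is constant in t. -/
theorem stmt_6 (k : ℝ) (x y x' y' x'' y'' : ℝ → ℝ) (V : ℝ → ℝ → ℝ) (J : ℝ → ℝ)
    (hV : ∀ a b : ℝ, V a b = k * (Real.sqrt a + Real.sqrt b))
    (hx : ∀ t, HasDerivAt x (x' t) t)
    (hy : ∀ t, HasDerivAt y (y' t) t)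
    (hx' : ∀ t, HasDerivAt x' (x'' t) t)
    (hy' : ∀ t, HasDerivAt y' (y'' t) t)
    (hxpos : ∀ t, 0 < x t)
    (hypos : ∀ t, 0 < y t)
    (heqx : ∀ t, x'' t = - deriv (fun a => V a (y t)) (x t))
    (heqy : ∀ t, y'' t = - deriv (fun b => V (x t) b) (y t))
    (hJ : ∀ t, J t =
      x' t ^ 3 - y' t ^ 3 +
      3 * k * (Real.sqrt (x t) * x' t - Real.sqrt (y t) * y' t)) :
    ∀ t₁ t₂ : ℝ, J t₁ = J t₂ := by
  have ex : ∀ t, x'' t = - (k * (1 / (2 * Real.sqrt (x t)))) := by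
    intro t
    rw [heqx t]
    have h : HasDerivAt (fun a => V a (y t)) (k * (1 / (2 * Real.sqrt (x t)))) (x t) := by
      simp only [hV]
      exact ((Real.hasDerivAt_sqrt (hxpos t).ne').add_const _).const_mul k
    rw [h.deriv]
  have ey : ∀ t, y'' t = - (k * (1 / (2 * Real.sqrt (y t)))) := by
    intro t
    rw [heqy t]
    have h : HasDerivAt (fun b => V (x t) b) (k * (1 / (2 * Real.sqrt (y t)))) (y t) := by
      simp only [hV]
      exact ((Real.hasDerivAt_sqrt (hypos t).ne').const_add _).const_mul k
    rw [h.deriv]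
  have hJd : ∀ t, HasDerivAt J 0 t := by
    intro t
    have e : J = fun t => x' t ^ 3 - y' t ^ 3 +
      3 * k * (Real.sqrt (x t) * x' t - Real.sqrt (y t) * y' t) := funext hJ
    rw [e]
    have h := (((hx' t).fun_pow 3).fun_sub ((hy' t).fun_pow 3)).fun_add
      (((((hx t).sqrt (hxpos t).ne').fun_mul (hx' t)).fun_sub
        (((hy t).sqrt (hypos t).ne').fun_mul (hy' t))).const_mul (3 * k))
    refine h.congr_deriv ?_
    rw [ex, ey]
    have h1 : Real.sqrt (x t) ≠ 0 := (Real.sqrt_pos.2 (hxpos t)).ne'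
    have h2 : Real.sqrt (y t) ≠ 0 := (Real.sqrt_pos.2 (hypos t)).ne'
    push_cast
    field_simp
    ring
  exact is_const_of_deriv_eq_zero (fun t => (hJd t).differentiableAt) (fun t => (hJd t).deriv)
end

section
/- Let k be a real constant. Suppose x, y : ℝ → ℝ are twice differentiable with x(t) > 0 and y(t) > 0 for all t, and satisfy the Newtonian equations of motion for the Inozemtsev potential V(x,y) = k·(xy)^{−2/3}. Then the cubic function J(t) = (y·x' − x·y')·x'·y' − 2k·(xy)^{−2/3}·(x·x' − y·y') is constant in t. -/
/-- Inozemtsev potential V = k (xy)^{-2/3}: the cubic expression is a first integral. -/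
theorem stmt_7 (k : ℝ) (x y x' y' x'' y'' : ℝ → ℝ) (V : ℝ → ℝ → ℝ) (J : ℝ → ℝ)
    (hV : ∀ a b : ℝ, V a b = k * (a * b) ^ (-(2 : ℝ) / 3))
    (hx : ∀ t, HasDerivAt x (x' t) t)
    (hy : ∀ t, HasDerivAt y (y' t) t)
    (hx' : ∀ t, HasDerivAt x' (x'' t) t)
    (hy' : ∀ t, HasDerivAt y' (y'' t) t)
    (hxpos : ∀ t, 0 < x t)
    (hypos : ∀ t, 0 < y t)
    (heqx : ∀ t, x'' t = - deriv (fun a => V a (y t)) (x t))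
    (heqy : ∀ t, y'' t = - deriv (fun b => V (x t) b) (y t))
    (hJ : ∀ t, J t =
      (y t * x' t - x t * y' t) * x' t * y' t -
      2 * k * (x t * y t) ^ (-(2 : ℝ) / 3) * (x t * x' t - y t * y' t)) :
    ∀ t₁ t₂ : ℝ, J t₁ = J t₂ := by
  have key : ∀ a b : ℝ, 0 < a → 0 < b →
      (a * b) ^ (-(2 : ℝ) / 3 - 1) = (a * b) ^ (-(2 : ℝ) / 3) / (a * b) := by
    intro a b ha hb
    exact Real.rpow_sub_one (mul_pos ha hb).ne' _
  have hdx : ∀ t, x'' t = 2 * k / 3 * (x t * y t) ^ (-(2 : ℝ) / 3) / x t := by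
    intro t
    have h1 := hxpos t
    have h2 := hypos t
    have h : HasDerivAt (fun a => V a (y t)) (k * (1 * y t * (-(2 : ℝ) / 3) *
        (x t * y t) ^ (-(2 : ℝ) / 3 - 1))) (x t) := by
      simp only [hV]
      exact ((((hasDerivAt_id (x t)).mul_const (y t)).rpow_const
        (Or.inl (mul_pos h1 h2).ne')).const_mul k)
    rw [heqx, h.deriv, key _ _ h1 h2]
    field_simp
  have hdy : ∀ t, y'' t = 2 * k / 3 * (x t * y t) ^ (-(2 : ℝ) / 3) / y t := by
    intro t
    have h1 := hxpos t
    have h2 := hypos t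
    have h : HasDerivAt (fun b => V (x t) b) (k * (x t * 1 * (-(2 : ℝ) / 3) *
        (x t * y t) ^ (-(2 : ℝ) / 3 - 1))) (y t) := by
      simp only [hV]
      exact ((((hasDerivAt_id (y t)).const_mul (x t)).rpow_const
        (Or.inl (mul_pos h1 h2).ne')).const_mul k)
    rw [heqy, h.deriv, key _ _ h1 h2]
    field_simp
  have hder : ∀ t, HasDerivAt J 0 t := by
    intro t
    have h1 := hxpos t
    have h2 := hypos t
    have hP : HasDerivAt (fun t => (x t * y t) ^ (-(2 : ℝ) / 3)) _ t :=
      ((hx t).mul (hy t)).rpow_const (Or.inl (mul_pos h1 h2).ne')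
    have hA := (((((hy t).mul (hx' t)).sub ((hx t).mul (hy' t))).mul (hx' t)).mul (hy' t)).sub
      ((hP.const_mul (2 * k)).mul (((hx t).mul (hx' t)).sub ((hy t).mul (hy' t))))
    have hJ' : J = _ := funext hJ
    rw [hJ']
    refine hA.congr_deriv ?_
    simp only [Pi.mul_apply, Pi.sub_apply]
    rw [key _ _ h1 h2, hdx, hdy]
    generalize (x t * y t) ^ (-(2 : ℝ) / 3) = P
    field_simp
    ring
  exact is_const_of_deriv_eq_zero (fun t => (hder t).differentiableAt) (fun t => (hder t).deriv)
end

section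
/- Let c₁, c₂, c₃ be real constants. Suppose x, y : ℝ → ℝ are twice differentiable with x(t) ≠ 0 and y(t) ≠ 0 for all t, and satisfy the Newtonian equations of motion for the potential V(x,y) = c₁(x² + y²) + c₂/x² + c₃/y². Then the cubic function J(t) = (y·x' − x·y')·(x'y' + 2c₁xy) + 2c₂·(y/x²)·y' − 2c₃·(x/y²)·x' is constant in t. -/
theorem stmt_8 (c₁ c₂ c₃ : ℝ) (x y x' y' x'' y'' : ℝ → ℝ) (V : ℝ → ℝ → ℝ) (J : ℝ → ℝ)
    (hV : ∀ a b : ℝ, V a b = c₁ * (a ^ 2 + b ^ 2) + c₂ / a ^ 2 + c₃ / b ^ 2)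
    (hx : ∀ t, HasDerivAt x (x' t) t)
    (hy : ∀ t, HasDerivAt y (y' t) t)
    (hx' : ∀ t, HasDerivAt x' (x'' t) t)
    (hy' : ∀ t, HasDerivAt y' (y'' t) t)
    (hxne : ∀ t, x t ≠ 0)
    (hyne : ∀ t, y t ≠ 0)
    (heqx : ∀ t, x'' t = - deriv (fun a => V a (y t)) (x t))
    (heqy : ∀ t, y'' t = - deriv (fun b => V (x t) b) (y t))
    (hJ : ∀ t, J t =
      (y t * x' t - x t * y' t) * (x' t * y' t + 2 * c₁ * x t * y t) +
      2 * c₂ * (y t / x t ^ 2) * y' t - 2 * c₃ * (x t / y t ^ 2) * x' t) :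
    ∀ t₁ t₂ : ℝ, J t₁ = J t₂ := by
  have key : ∀ A B C a : ℝ, a ≠ 0 →
      HasDerivAt (fun a : ℝ => A * (a ^ 2) + B / a ^ 2 + C) (2 * A * a - 2 * B / a ^ 3) a := by
    intro A B C a ha
    have h2 : HasDerivAt (fun a : ℝ => a ^ 2) (2 * a) a := by
      simpa using hasDerivAt_pow 2 a
    have h := ((h2.const_mul A).add
      ((hasDerivAt_const a B).div h2 (pow_ne_zero 2 ha))).add_const C
    refine h.congr_deriv ?_
    field_simp
    ring
  have ex : ∀ t, x'' t = - (2 * c₁ * x t - 2 * c₂ / x t ^ 3) := by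
    intro t
    rw [heqx t, ← (key c₁ c₂ (c₁ * y t ^ 2 + c₃ / y t ^ 2) (x t) (hxne t)).deriv]
    congr 2
    funext a
    rw [hV]; ring
  have ey : ∀ t, y'' t = - (2 * c₁ * y t - 2 * c₃ / y t ^ 3) := by
    intro t
    rw [heqy t, ← (key c₁ c₃ (c₁ * x t ^ 2 + c₂ / x t ^ 2) (y t) (hyne t)).deriv]
    congr 2
    funext a
    rw [hV]; ring
  have hd : ∀ t, HasDerivAt J 0 t := by
    intro t
    have hJ' := funext hJ
    rw [hJ']
    have h1 := ((hy t).mul (hx' t)).sub ((hx t).mul (hy' t))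
    have h2 := ((hx' t).mul (hy' t)).add (((hx t).const_mul (2 * c₁)).mul (hy t))
    have h3 := (((hy t).div ((hx t).pow 2) (pow_ne_zero 2 (hxne t))).const_mul (2 * c₂)).mul (hy' t)
    have h4 := (((hx t).div ((hy t).pow 2) (pow_ne_zero 2 (hyne t))).const_mul (2 * c₃)).mul (hx' t)
    refine (((h1.mul h2).add h3).sub h4).congr_deriv ?_
    have hx0 := hxne t
    have hy0 := hyne t
    simp only [Pi.mul_apply, Pi.sub_apply, Pi.add_apply, Pi.pow_apply, Pi.div_apply, ex, ey]
    field_simp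
    push_cast
    ring
  exact is_const_of_deriv_eq_zero (fun t => (hd t).differentiableAt) (fun t => (hd t).deriv)
end

section
/- Let c₀ be a real constant. Suppose x, y : ℝ → ℝ are twice differentiable and satisfy the Newtonian equations of motion for the anisotropic oscillator potential V(x,y) = c₀(9x² + y²). Then the cubic function J(t) = (x·y' − y·x')·y'² + (2c₀/3)·y³·x' − 6c₀·x·y²·y' is constant in t. -/
theorem stmt_9 (c₀ : ℝ) (x y x' y' x'' y'' : ℝ → ℝ) (V : ℝ → ℝ → ℝ) (J : ℝ → ℝ)
    (hV : ∀ a b : ℝ, V a b = c₀ * (9 * a ^ 2 + b ^ 2))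
    (hx : ∀ t, HasDerivAt x (x' t) t)
    (hy : ∀ t, HasDerivAt y (y' t) t)
    (hx' : ∀ t, HasDerivAt x' (x'' t) t)
    (hy' : ∀ t, HasDerivAt y' (y'' t) t)
    (heqx : ∀ t, x'' t = - deriv (fun a => V a (y t)) (x t))
    (heqy : ∀ t, y'' t = - deriv (fun b => V (x t) b) (y t))
    (hJ : ∀ t, J t =
      (x t * y' t - y t * x' t) * y' t ^ 2 +
      (2 * c₀ / 3) * y t ^ 3 * x' t - 6 * c₀ * x t * y t ^ 2 * y' t) :
    ∀ t₁ t₂ : ℝ, J t₁ = J t₂ := by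
  have ex : ∀ t, x'' t = -(18 * c₀ * x t) := by
    intro t
    rw [heqx t]
    have h : HasDerivAt (fun a => V a (y t)) (18 * c₀ * x t) (x t) := by
      simp only [hV]
      have := ((((hasDerivAt_id (x t)).pow 2).const_mul 9).add_const (y t ^ 2)).const_mul c₀
      refine HasDerivAt.congr_deriv this ?_
      simp
      ring
    rw [h.deriv]
  have ey : ∀ t, y'' t = -(2 * c₀ * y t) := by
    intro t
    rw [heqy t]
    have h : HasDerivAt (fun b => V (x t) b) (2 * c₀ * y t) (y t) := by
      simp only [hV]
      have := (((hasDerivAt_id (y t)).pow 2).const_add (9 * x t ^ 2)).const_mul c₀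
      refine HasDerivAt.congr_deriv this ?_
      simp
      ring
    rw [h.deriv]
  have hd : ∀ t, HasDerivAt J 0 t := by
    intro t
    rw [funext hJ]
    have := (((((hx t).mul (hy' t)).sub ((hy t).mul (hx' t))).mul ((hy' t).pow 2)).add
      ((((hy t).pow 3).const_mul (2 * c₀ / 3)).mul (hx' t))).sub
      ((((hx t).const_mul (6 * c₀)).mul ((hy t).pow 2)).mul (hy' t))
    refine HasDerivAt.congr_deriv this ?_
    simp [ex, ey]
    ring
  exact is_const_of_deriv_eq_zero (fun t => (hd t).differentiableAt) (fun t => (hd t).deriv)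
end

section
/- Let c₁, c₂, c₃ be real constants. Suppose x, y : ℝ → ℝ are twice differentiable with x(t)² ≠ y(t)² for all t, and satisfy the Newtonian equations of motion for the potential V(x,y) = c₁(x² + y²) + (c₂·xy + c₃·(x² + y²))/(x² − y²)². Then the cubic function J(t) = (x·y' − y·x')·(y'² − x'²) − 2c₁(x·y' − y·x')·(x² − y²) + x(x² + 3y²)(c₂·x' + 2c₃·y')/(x² − y²)² + y(3x² + y²)(2c₃·x' + c₂·y')/(x² − y²)² is constant in t. -/
theorem stmt_10 (c₁ c₂ c₃ : ℝ) (x y x' y' x'' y'' : ℝ → ℝ) (V : ℝ → ℝ → ℝ) (J : ℝ → ℝ)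
    (hV : ∀ a b : ℝ, V a b = c₁ * (a ^ 2 + b ^ 2) +
      (c₂ * a * b + c₃ * (a ^ 2 + b ^ 2)) / (a ^ 2 - b ^ 2) ^ 2)
    (hx : ∀ t, HasDerivAt x (x' t) t)
    (hy : ∀ t, HasDerivAt y (y' t) t)
    (hx' : ∀ t, HasDerivAt x' (x'' t) t)
    (hy' : ∀ t, HasDerivAt y' (y'' t) t)
    (hne : ∀ t, x t ^ 2 ≠ y t ^ 2)
    (heqx : ∀ t, x'' t = - deriv (fun a => V a (y t)) (x t))
    (heqy : ∀ t, y'' t = - deriv (fun b => V (x t) b) (y t))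
    (hJ : ∀ t, J t =
      (x t * y' t - y t * x' t) * (y' t ^ 2 - x' t ^ 2) -
      2 * c₁ * (x t * y' t - y t * x' t) * (x t ^ 2 - y t ^ 2) +
      x t * (x t ^ 2 + 3 * y t ^ 2) * (c₂ * x' t + 2 * c₃ * y' t) / (x t ^ 2 - y t ^ 2) ^ 2 +
      y t * (3 * x t ^ 2 + y t ^ 2) * (2 * c₃ * x' t + c₂ * y' t) / (x t ^ 2 - y t ^ 2) ^ 2) :
    ∀ t₁ t₂ : ℝ, J t₁ = J t₂ := by
  have hD : ∀ t, x t ^ 2 - y t ^ 2 ≠ 0 := fun t => sub_ne_zero.mpr (hne t)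
  have ex : ∀ t, x'' t = -(2 * c₁ * x t + (c₂ * y t + 2 * c₃ * x t) / (x t ^ 2 - y t ^ 2) ^ 2
      - 4 * x t * (c₂ * x t * y t + c₃ * (x t ^ 2 + y t ^ 2)) / (x t ^ 2 - y t ^ 2) ^ 3) := by
    intro t
    rw [heqx t]
    congr 1
    apply HasDerivAt.deriv
    have e : (fun a => V a (y t)) = fun a => c₁ * (a ^ 2 + y t ^ 2) +
      (c₂ * a * y t + c₃ * (a ^ 2 + y t ^ 2)) / (a ^ 2 - y t ^ 2) ^ 2 := by
      funext a; exact hV a _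
    rw [e]
    have h := hasDerivAt_id' (x t)
    have h2 := (h.fun_pow 2).add_const (y t ^ 2)
    have hd := ((h.fun_pow 2).sub_const (y t ^ 2)).fun_pow 2
    have := (h2.const_mul c₁).fun_add
      ((((h.const_mul c₂).mul_const (y t)).fun_add (h2.const_mul c₃)).fun_div hd
        (pow_ne_zero 2 (hD t)))
    convert this using 1
    have := hD t
    field_simp
    push_cast
    ring
  have ey : ∀ t, y'' t = -(2 * c₁ * y t + (c₂ * x t + 2 * c₃ * y t) / (x t ^ 2 - y t ^ 2) ^ 2
      + 4 * y t * (c₂ * x t * y t + c₃ * (x t ^ 2 + y t ^ 2)) / (x t ^ 2 - y t ^ 2) ^ 3) := by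
    intro t
    rw [heqy t]
    congr 1
    apply HasDerivAt.deriv
    have e : (fun b => V (x t) b) = fun b => c₁ * (x t ^ 2 + b ^ 2) +
      (c₂ * x t * b + c₃ * (x t ^ 2 + b ^ 2)) / (x t ^ 2 - b ^ 2) ^ 2 := by
      funext a; exact hV _ a
    rw [e]
    have h := hasDerivAt_id' (y t)
    have h2 := (h.fun_pow 2).const_add (x t ^ 2)
    have hd := ((h.fun_pow 2).const_sub (x t ^ 2)).fun_pow 2
    have := (h2.const_mul c₁).fun_add
      (((h.const_mul (c₂ * x t)).fun_add (h2.const_mul c₃)).fun_div hd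
        (pow_ne_zero 2 (hD t)))
    convert this using 1
    have := hD t
    field_simp
    push_cast
    ring
  have hJd : ∀ t, HasDerivAt J 0 t := by
    intro t
    rw [funext hJ]
    have X := hx t
    have Y := hy t
    have P := hx' t
    have Q := hy' t
    have L := (X.fun_mul Q).fun_sub (Y.fun_mul P)
    have D := (X.fun_pow 2).fun_sub (Y.fun_pow 2)
    have D2 := D.fun_pow 2
    have A := X.fun_mul ((X.fun_pow 2).fun_add ((Y.fun_pow 2).const_mul 3))
    have B := Y.fun_mul (((X.fun_pow 2).const_mul 3).fun_add (Y.fun_pow 2))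
    have A' := A.fun_mul ((P.const_mul c₂).fun_add (Q.const_mul (2 * c₃)))
    have B' := B.fun_mul ((P.const_mul (2 * c₃)).fun_add (Q.const_mul c₂))
    have hd2 := pow_ne_zero 2 (hD t)
    have T := (((L.fun_mul ((Q.fun_pow 2).fun_sub (P.fun_pow 2))).fun_sub
      ((L.const_mul (2 * c₁)).fun_mul D)).fun_add (A'.fun_div D2 hd2)).fun_add (B'.fun_div D2 hd2)
    refine T.congr_deriv ?_
    rw [ex t, ey t]
    have := hD t
    generalize x t = a at *
    generalize y t = b at *
    generalize x' t = p at *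
    generalize y' t = q at *
    clear * - this
    push_cast
    field_simp
    ring
  exact is_const_of_deriv_eq_zero (fun t => (hJd t).differentiableAt) (fun t => (hJd t).deriv)
end

section
/- Let k be a real constant. Suppose x, y : ℝ → ℝ are twice differentiable with x(t)² − y(t)² > 0 for all t, and satisfy the Newtonian equations of motion for the potential V(x,y) = k·(x² − y²)^{−2/3}. Then the cubic function J(t) = (x·y' − y·x')·(y'² − x'²) + 4k·(x² − y²)^{−2/3}·(y·x' + x·y') is constant in t. -/
theorem stmt_11 (k : ℝ) (x y x' y' x'' y'' : ℝ → ℝ) (V : ℝ → ℝ → ℝ) (J : ℝ → ℝ)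
    (hV : ∀ a b : ℝ, V a b = k * (a ^ 2 - b ^ 2) ^ (-(2 : ℝ) / 3))
    (hx : ∀ t, HasDerivAt x (x' t) t)
    (hy : ∀ t, HasDerivAt y (y' t) t)
    (hx' : ∀ t, HasDerivAt x' (x'' t) t)
    (hy' : ∀ t, HasDerivAt y' (y'' t) t)
    (hpos : ∀ t, 0 < x t ^ 2 - y t ^ 2)
    (heqx : ∀ t, x'' t = - deriv (fun a => V a (y t)) (x t))
    (heqy : ∀ t, y'' t = - deriv (fun b => V (x t) b) (y t))
    (hJ : ∀ t, J t =
      (x t * y' t - y t * x' t) * (y' t ^ 2 - x' t ^ 2) +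
      4 * k * (x t ^ 2 - y t ^ 2) ^ (-(2 : ℝ) / 3) * (y t * x' t + x t * y' t)) :
    ∀ t₁ t₂ : ℝ, J t₁ = J t₂ := by
  have hVx : ∀ t, x'' t = 4 / 3 * k * (x t ^ 2 - y t ^ 2) ^ (-(2 : ℝ) / 3 - 1) * x t := by
    intro t
    have h1 : HasDerivAt (fun a : ℝ => a ^ 2 - y t ^ 2) (2 * x t) (x t) := by
      simpa using (hasDerivAt_pow 2 (x t)).sub_const (y t ^ 2)
    have h2 := (h1.rpow_const (p := -(2 : ℝ) / 3) (Or.inl (hpos t).ne')).const_mul k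
    have h3 : (fun a => V a (y t)) = fun a => k * (a ^ 2 - y t ^ 2) ^ (-(2 : ℝ) / 3) := by
      funext a
      exact hV a _
    rw [heqx t, h3, h2.deriv]
    ring
  have hVy : ∀ t, y'' t = -(4 / 3 * k * (x t ^ 2 - y t ^ 2) ^ (-(2 : ℝ) / 3 - 1) * y t) := by
    intro t
    have h1 : HasDerivAt (fun b : ℝ => x t ^ 2 - b ^ 2) (-(2 * y t)) (y t) := by
      simpa using (hasDerivAt_pow 2 (y t)).const_sub (x t ^ 2)
    have h2 := (h1.rpow_const (p := -(2 : ℝ) / 3) (Or.inl (hpos t).ne')).const_mul k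
    have h3 : (fun b => V (x t) b) = fun b => k * (x t ^ 2 - b ^ 2) ^ (-(2 : ℝ) / 3) := by
      funext b
      exact hV _ b
    rw [heqy t, h3, h2.deriv]
    ring
  have hJd : ∀ t, HasDerivAt J 0 t := by
    intro t
    have hu := ((hx t).fun_pow 2).fun_sub ((hy t).fun_pow 2)
    have hw := (hu.rpow_const (p := -(2 : ℝ) / 3) (Or.inl (hpos t).ne')).const_mul (4 * k)
    have hA := (((hx t).fun_mul (hy' t)).fun_sub ((hy t).fun_mul (hx' t))).fun_mul
      (((hy' t).fun_pow 2).fun_sub ((hx' t).fun_pow 2))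
    have hB := hw.fun_mul (((hy t).fun_mul (hx' t)).fun_add ((hx t).fun_mul (hy' t)))
    have hT := hA.fun_add hB
    rw [funext hJ]
    refine hT.congr_deriv ?_
    have hp : (x t ^ 2 - y t ^ 2) ^ (-(2 : ℝ) / 3)
        = (x t ^ 2 - y t ^ 2) ^ (-(2 : ℝ) / 3 - 1) * (x t ^ 2 - y t ^ 2) := by
      rw [← Real.rpow_add_one (hpos t).ne']
      congr 1
      ring
    rw [hp, hVx t, hVy t]
    generalize (x t ^ 2 - y t ^ 2) ^ (-(2 : ℝ) / 3 - 1) = p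
    norm_num
    ring
  exact is_const_of_deriv_eq_zero (fun t => (hJd t).differentiableAt) (fun t => (hJd t).deriv)
end

section
/- Let a₂, a₅, k₁, k₂, k₃ be real constants and write r = √(x² + y²). Suppose x, y : ℝ → ℝ are twice differentiable with r(t) > 0 and a₂·y(t) − a₅·x(t) ≠ 0 for all t, and satisfy the Newtonian equations of motion for the potential V(x,y) = k₁/(a₂y − a₅x)² + k₂/r + k₃(a₂x + a₅y)/(r(a₂y − a₅x)²). Then, with L = x·y' − y·x', the cubic function J(t) = L²·(a₂x' + a₅y') + 2k₁r²(a₂x' + a₅y')/(a₂y − a₅x)² − (k₂(a₂y − a₅x)/r)·L + (k₃r/(a₂y − a₅x))·(a₂y' − a₅x') − (k₃(a₂x + a₅y)/(r(a₂y − a₅x)))·L + 2k₃(a₂x + a₅y)·r·(a₂x' + a₅y')/(a₂y − a₅x)² is constant in t. -/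
theorem aux_alg (a b k₁ k₂ k₃ x y r p q X Y R u : ℝ) (hr : r ≠ 0) (hu : u ≠ 0)
    (hu' : u = a * y - b * x)
    (hrr : r ^ 2 = x ^ 2 + y ^ 2) (hR : R = (x * p + y * q) / r)
    (hX : X = -(2 * k₁ * b / u ^ 3 - k₂ * (x / r) / r ^ 2 +
      k₃ * (a / (r * u ^ 2) - (a * x + b * y) * (x / r) / (r ^ 2 * u ^ 2) +
        2 * (a * x + b * y) * b / (r * u ^ 3))))
    (hY : Y = -(-2 * k₁ * a / u ^ 3 - k₂ * (y / r) / r ^ 2 +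
      k₃ * (b / (r * u ^ 2) - (a * x + b * y) * (y / r) / (r ^ 2 * u ^ 2) -
        2 * (a * x + b * y) * a / (r * u ^ 3)))) :
    2 * (x * q - y * p) * (x * Y - y * X) * (a * p + b * q)
      + (x * q - y * p) ^ 2 * (a * X + b * Y)
      + 2 * k₁ * (2 * r * R * (a * p + b * q) / u ^ 2 + r ^ 2 * (a * X + b * Y) / u ^ 2
        - 2 * r ^ 2 * (a * p + b * q) * (a * q - b * p) / u ^ 3)
      - (k₂ * ((a * q - b * p) / r - u * R / r ^ 2) * (x * q - y * p)
        + k₂ * u / r * (x * Y - y * X))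
      + k₃ * ((R / u - r * (a * q - b * p) / u ^ 2) * (a * q - b * p) + r / u * (a * Y - b * X))
      - k₃ * (((a * p + b * q) / (r * u) - (a * x + b * y) * R / (r ^ 2 * u)
          - (a * x + b * y) * (a * q - b * p) / (r * u ^ 2)) * (x * q - y * p)
          + (a * x + b * y) / (r * u) * (x * Y - y * X))
      + 2 * k₃ * ((a * p + b * q) * r * (a * p + b * q) / u ^ 2
          + (a * x + b * y) * R * (a * p + b * q) / u ^ 2
          + (a * x + b * y) * r * (a * X + b * Y) / u ^ 2
          - 2 * (a * x + b * y) * r * (a * p + b * q) * (a * q - b * p) / u ^ 3) = 0 := by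
  have h4 : r ^ 4 = (x ^ 2 + y ^ 2) ^ 2 := by rw [← hrr]; ring
  have e1 : x * Y - y * X = 2 * k₁ * (a * x + b * y) / u ^ 3
      + k₃ * (1 / (r * u) + 2 * (a * x + b * y) ^ 2 / (r * u ^ 3)) := by
    rw [hX, hY]; field_simp; rw [hu']; ring
  have hS : (a ^ 2 + b ^ 2) * r ^ 2 = (a * x + b * y) ^ 2 + u ^ 2 := by rw [hrr, hu']; ring
  have e2 : a * X + b * Y = (a * x + b * y) * k₂ / r ^ 3 - k₃ / (r ^ 3) := by
    have : a * X + b * Y = (a * x + b * y) * k₂ / r ^ 3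
        - k₃ * ((a ^ 2 + b ^ 2) * r ^ 2 - (a * x + b * y) ^ 2) / (r ^ 3 * u ^ 2) := by
      rw [hX, hY]; field_simp; ring
    rw [this, hS]; field_simp; ring
  have hd : (a * x + b * y) ^ 2 + u ^ 2 ≠ 0 := by positivity
  have e3 : a * Y - b * X = 2 * k₁ * (((a * x + b * y) ^ 2 + u ^ 2) / r ^ 2) / u ^ 3
      + k₂ * u / r ^ 3 + k₃ * ((a * x + b * y) / (r ^ 3 * u)
      + 2 * (a * x + b * y) * (((a * x + b * y) ^ 2 + u ^ 2) / r ^ 2) / (r * u ^ 3)) := by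
    rw [← hS, hX, hY]; field_simp; rw [hu']; ring
  have e4 : x * q - y * p = r ^ 2 * ((a * x + b * y) * (a * q - b * p) - u * (a * p + b * q)) /
      ((a * x + b * y) ^ 2 + u ^ 2) := by
    rw [eq_div_iff hd, ← hS, hu']; ring
  have e5 : R = r * ((a * x + b * y) * (a * p + b * q) + u * (a * q - b * p)) /
      ((a * x + b * y) ^ 2 + u ^ 2) := by
    rw [eq_div_iff hd, ← hS, hu', hR]; field_simp; ring
  rw [e1, e2, e3, e4, e5]
  clear e1 e2 e3 e4 e5 hS hX hY hR hrr hu' h4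
  generalize a * x + b * y = w at *
  generalize a * p + b * q = P
  generalize a * q - b * p = U
  field_simp
  ring

theorem aux_gradx' (a b c d k₁ k₂ k₃ x y r : ℝ) (hr : r ≠ 0) (hu : a * y - b * x ≠ 0)
    (hrr : r = Real.sqrt (x ^ 2 + y ^ 2)) :
    HasDerivAt (fun s => k₁ / (a * y - b * s) ^ 2 + k₂ / Real.sqrt (s ^ 2 + y ^ 2) +
      k₃ * (c * s + d * y) / (Real.sqrt (s ^ 2 + y ^ 2) * (a * y - b * s) ^ 2))
     (2 * k₁ * b / (a * y - b * x) ^ 3 - k₂ * (x / r) / r ^ 2 +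
      k₃ * (c / (r * (a * y - b * x) ^ 2)
        - (c * x + d * y) * (x / r) / (r ^ 2 * (a * y - b * x) ^ 2) +
        2 * (c * x + d * y) * b / (r * (a * y - b * x) ^ 3))) x := by
  have hpos : x ^ 2 + y ^ 2 ≠ 0 := by
    intro h; rw [h, Real.sqrt_zero] at hrr; exact hr hrr
  have hu1 : HasDerivAt (fun s => a * y - b * s) (-b) x := by
    simpa using ((hasDerivAt_id x).const_mul b).const_sub (a * y)
  have hw1 : HasDerivAt (fun s => c * s + d * y) c x := by
    simpa using ((hasDerivAt_id x).const_mul c).add_const (d * y)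
  have hr1 : HasDerivAt (fun s => Real.sqrt (s ^ 2 + y ^ 2)) (x / r) x := by
    have := (((hasDerivAt_id x).pow 2).add_const (y ^ 2)).sqrt (by simpa using hpos)
    simp only [id, Pi.pow_apply] at this
    rw [← hrr] at this
    refine this.congr_deriv ?_
    field_simp
    norm_num
  have hs : Real.sqrt (x ^ 2 + y ^ 2) ≠ 0 := hrr ▸ hr
  have h := (((hasDerivAt_const x k₁).fun_div (hu1.fun_pow 2) (pow_ne_zero 2 hu)).fun_add
    ((hasDerivAt_const x k₂).fun_div hr1 hs)).fun_add
    ((hw1.const_mul k₃).fun_div (hr1.fun_mul (hu1.fun_pow 2)) (mul_ne_zero hs (pow_ne_zero 2 hu)))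
  refine h.congr_deriv ?_
  rw [← hrr]
  generalize c * x + d * y = w
  generalize a * y - b * x = u at *
  field_simp
  push_cast
  ring

theorem aux_grady (a b k₁ k₂ k₃ x y r : ℝ) (hr : r ≠ 0) (hu : a * y - b * x ≠ 0)
    (hrr : r = Real.sqrt (x ^ 2 + y ^ 2)) :
    HasDerivAt (fun s => k₁ / (-b * x - -a * s) ^ 2 + k₂ / Real.sqrt (s ^ 2 + x ^ 2) +
      k₃ * (b * s + a * x) / (Real.sqrt (s ^ 2 + x ^ 2) * (-b * x - -a * s) ^ 2))
     (-2 * k₁ * a / (a * y - b * x) ^ 3 - k₂ * (y / r) / r ^ 2 +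
      k₃ * (b / (r * (a * y - b * x) ^ 2)
        - (a * x + b * y) * (y / r) / (r ^ 2 * (a * y - b * x) ^ 2) -
        2 * (a * x + b * y) * a / (r * (a * y - b * x) ^ 3))) y := by
  have e : -b * x - -a * y = a * y - b * x := by ring
  have h0 : b * y + a * x = a * x + b * y := by ring
  have h := aux_gradx' (-b) (-a) b a k₁ k₂ k₃ y x r hr (by rwa [e]) (by rw [hrr, add_comm])
  rw [e, h0] at h
  refine h.congr_deriv ?_
  ring

theorem stmt_13 (a₂ a₅ k₁ k₂ k₃ : ℝ) (x y x' y' x'' y'' r L : ℝ → ℝ)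
    (V : ℝ → ℝ → ℝ) (J : ℝ → ℝ)
    (hV : ∀ a b : ℝ, V a b =
      k₁ / (a₂ * b - a₅ * a) ^ 2 +
      k₂ / Real.sqrt (a ^ 2 + b ^ 2) +
      k₃ * (a₂ * a + a₅ * b) / (Real.sqrt (a ^ 2 + b ^ 2) * (a₂ * b - a₅ * a) ^ 2))
    (hr : ∀ t, r t = Real.sqrt (x t ^ 2 + y t ^ 2))
    (hL : ∀ t, L t = x t * y' t - y t * x' t)
    (hx : ∀ t, HasDerivAt x (x' t) t)
    (hy : ∀ t, HasDerivAt y (y' t) t)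
    (hx' : ∀ t, HasDerivAt x' (x'' t) t)
    (hy' : ∀ t, HasDerivAt y' (y'' t) t)
    (hrpos : ∀ t, 0 < r t)
    (hne : ∀ t, a₂ * y t - a₅ * x t ≠ 0)
    (heqx : ∀ t, x'' t = - deriv (fun a => V a (y t)) (x t))
    (heqy : ∀ t, y'' t = - deriv (fun b => V (x t) b) (y t))
    (hJ : ∀ t, J t =
      L t ^ 2 * (a₂ * x' t + a₅ * y' t) +
      2 * k₁ * r t ^ 2 * (a₂ * x' t + a₅ * y' t) / (a₂ * y t - a₅ * x t) ^ 2 -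
      (k₂ * (a₂ * y t - a₅ * x t) / r t) * L t +
      (k₃ * r t / (a₂ * y t - a₅ * x t)) * (a₂ * y' t - a₅ * x' t) -
      (k₃ * (a₂ * x t + a₅ * y t) / (r t * (a₂ * y t - a₅ * x t))) * L t +
      2 * k₃ * (a₂ * x t + a₅ * y t) * r t * (a₂ * x' t + a₅ * y' t) /
        (a₂ * y t - a₅ * x t) ^ 2) :
    ∀ t₁ t₂ : ℝ, J t₁ = J t₂ := by
  have hder : ∀ t, HasDerivAt J 0 t := by
    intro t
    have hr0 : r t ≠ 0 := (hrpos t).ne'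
    have hpos : x t ^ 2 + y t ^ 2 ≠ 0 := by
      intro h
      have h1 := hr t
      rw [h, Real.sqrt_zero] at h1
      exact hr0 h1
    have hrr : r t ^ 2 = x t ^ 2 + y t ^ 2 := by
      rw [hr t, Real.sq_sqrt (by positivity)]
    have hX := heqx t
    simp only [hV] at hX
    rw [(aux_gradx' a₂ a₅ a₂ a₅ k₁ k₂ k₃ (x t) (y t) (r t) hr0 (hne t) (hr t)).deriv] at hX
    have hY := heqy t
    have : (fun b => V (x t) b) = fun s => k₁ / (-a₅ * x t - -a₂ * s) ^ 2
        + k₂ / Real.sqrt (s ^ 2 + x t ^ 2) + k₃ * (a₅ * s + a₂ * x t) /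
        (Real.sqrt (s ^ 2 + x t ^ 2) * (-a₅ * x t - -a₂ * s) ^ 2) := by
      funext s
      rw [hV, add_comm (x t ^ 2), add_comm (a₂ * x t)]
      have e : a₂ * s - a₅ * x t = -a₅ * x t - -a₂ * s := by ring
      rw [e]
    rw [this] at hY
    rw [(aux_grady a₂ a₅ k₁ k₂ k₃ (x t) (y t) (r t) hr0 (hne t) (hr t)).deriv] at hY
    have hr1 : HasDerivAt r ((x t * x' t + y t * y' t) / r t) t := by
      have := (((hx t).fun_pow 2).fun_add ((hy t).fun_pow 2)).sqrt hpos
      rw [← hr t, ← funext hr] at this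
      refine this.congr_deriv ?_
      push_cast
      field_simp
    have hu1 := ((hy t).const_mul a₂).fun_sub ((hx t).const_mul a₅)
    have hw1 := ((hx t).const_mul a₂).fun_add ((hy t).const_mul a₅)
    have hU1 := ((hy' t).const_mul a₂).fun_sub ((hx' t).const_mul a₅)
    have hP1 := ((hx' t).const_mul a₂).fun_add ((hy' t).const_mul a₅)
    have hL1 : HasDerivAt L (x t * y'' t - y t * x'' t) t := by
      have h2 : L = fun t => x t * y' t - y t * x' t := funext hL
      rw [h2]
      refine (((hx t).fun_mul (hy' t)).fun_sub ((hy t).fun_mul (hx' t))).congr_deriv ?_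
      ring
    have hJ2 := funext hJ
    have hu0 := hne t
    have h := ((((((hL1.fun_pow 2).fun_mul hP1).fun_add
      ((((hr1.fun_pow 2).const_mul (2 * k₁)).fun_mul hP1).fun_div (hu1.fun_pow 2)
        (pow_ne_zero 2 hu0))).fun_sub
      (((hu1.const_mul k₂).fun_div hr1 hr0).fun_mul hL1)).fun_add
      (((hr1.const_mul k₃).fun_div hu1 hu0).fun_mul hU1)).fun_sub
      (((hw1.const_mul k₃).fun_div (hr1.fun_mul hu1) (mul_ne_zero hr0 hu0)).fun_mul hL1)).fun_add
      ((((hw1.const_mul (2 * k₃)).fun_mul hr1).fun_mul hP1).fun_div (hu1.fun_pow 2)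
        (pow_ne_zero 2 hu0))
    rw [hJ2]
    refine h.congr_deriv ?_
    have key := aux_alg a₂ a₅ k₁ k₂ k₃ (x t) (y t) (r t) (x' t) (y' t) (x'' t) (y'' t)
      ((x t * x' t + y t * y' t) / r t) (a₂ * y t - a₅ * x t) hr0 hu0 rfl hrr rfl hX hY
    rw [hL t]
    refine Eq.trans ?_ key
    generalize (x t * x' t + y t * y' t) / r t = R
    generalize a₂ * x t + a₅ * y t = w
    generalize x t * y' t - y t * x' t = l
    generalize x t * y'' t - y t * x'' t = l'
    generalize a₂ * y' t - a₅ * x' t = U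
    generalize a₂ * x' t + a₅ * y' t = P
    generalize a₂ * y'' t - a₅ * x'' t = B
    generalize a₂ * x'' t + a₅ * y'' t = A
    generalize a₂ * y t - a₅ * x t = u at *
    push_cast
    field_simp
    ring
  exact is_const_of_deriv_eq_zero (fun t => (hder t).differentiableAt) (fun t => (hder t).deriv)
end

section
/- Let k₁, k₂, k₃ be real constants and write r = √(x² + y²). Suppose x, y : ℝ → ℝ are twice differentiable with r(t) > 0 and y(t) ≠ 0 for all t, and satisfy the Newtonian equations of motion for the potential V(x,y) = k₁/y² + k₂/r + k₃·x/(r·y²). Then, with L = x·y' − y·x', the cubic function J(t) = x'·L² − (k₂·y/r)·L + (2k₁r²/y²)·x' + (k₃·x(2x² + 3y²)/(r·y²))·x' + (k₃·y/r)·y' is constant in t. -/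
theorem stmt_14 (k₁ k₂ k₃ : ℝ) (x y x' y' x'' y'' r L : ℝ → ℝ)
    (V : ℝ → ℝ → ℝ) (J : ℝ → ℝ)
    (hV : ∀ a b : ℝ, V a b =
      k₁ / b ^ 2 + k₂ / Real.sqrt (a ^ 2 + b ^ 2) +
      k₃ * a / (Real.sqrt (a ^ 2 + b ^ 2) * b ^ 2))
    (hr : ∀ t, r t = Real.sqrt (x t ^ 2 + y t ^ 2))
    (hL : ∀ t, L t = x t * y' t - y t * x' t)
    (hx : ∀ t, HasDerivAt x (x' t) t)
    (hy : ∀ t, HasDerivAt y (y' t) t)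
    (hx' : ∀ t, HasDerivAt x' (x'' t) t)
    (hy' : ∀ t, HasDerivAt y' (y'' t) t)
    (hrpos : ∀ t, 0 < r t)
    (hyne : ∀ t, y t ≠ 0)
    (heqx : ∀ t, x'' t = - deriv (fun a => V a (y t)) (x t))
    (heqy : ∀ t, y'' t = - deriv (fun b => V (x t) b) (y t))
    (hJ : ∀ t, J t =
      x' t * L t ^ 2 - (k₂ * y t / r t) * L t +
      (2 * k₁ * r t ^ 2 / y t ^ 2) * x' t +
      (k₃ * x t * (2 * x t ^ 2 + 3 * y t ^ 2) / (r t * y t ^ 2)) * x' t +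
      (k₃ * y t / r t) * y' t) :
    ∀ t₁ t₂ : ℝ, J t₁ = J t₂ := by
  have hr2 : ∀ t, r t ^ 2 = x t ^ 2 + y t ^ 2 := by
    intro t
    rw [hr t, Real.sq_sqrt (by positivity)]
  have hne : ∀ t, x t ^ 2 + y t ^ 2 ≠ 0 := by
    intro t
    rw [← hr2 t]
    exact pow_ne_zero 2 (hrpos t).ne'
  have hrd : ∀ t, HasDerivAt r ((x t * x' t + y t * y' t) / r t) t := by
    intro t
    have h := (((hx t).pow 2).add ((hy t).pow 2)).sqrt (hne t)
    have e : r = fun t => Real.sqrt (x t ^ 2 + y t ^ 2) := funext hr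
    have h0 := (hrpos t).ne'
    have hrt := hr t
    rw [e]
    refine h.congr_deriv ?_
    simp only [Pi.add_apply, Pi.pow_apply]
    rw [← hrt]
    field_simp
    ring
  have hax : ∀ t, x'' t = k₂ * x t / r t ^ 3 - k₃ / (r t * y t ^ 2)
      + k₃ * x t ^ 2 / (r t ^ 3 * y t ^ 2) := by
    intro t
    have h0 := (hrpos t).ne'
    have h1 := hyne t
    have hs : HasDerivAt (fun a => Real.sqrt (a ^ 2 + y t ^ 2)) (x t / r t) (x t) := by
      have h := ((hasDerivAt_pow 2 (x t)).add_const (y t ^ 2)).sqrt (hne t)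
      refine h.congr_deriv ?_
      rw [← hr t]
      field_simp
      norm_num
    have hs0 : Real.sqrt (x t ^ 2 + y t ^ 2) ≠ 0 := by rw [← hr t]; exact h0
    have hd := ((hasDerivAt_const (x t) (k₁ / y t ^ 2)).add
      ((hasDerivAt_const (x t) k₂).div hs hs0)).add
      (((hasDerivAt_id (x t)).const_mul k₃).div (hs.mul_const (y t ^ 2))
        (mul_ne_zero hs0 (pow_ne_zero 2 h1)))
    have e : (fun a => V a (y t)) = _ := funext (fun a => hV a (y t))
    rw [heqx t, e]
    have hd' := hd.deriv
    refine (congrArg Neg.neg hd').trans ?_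
    rw [← hr t]
    simp only [id]
    field_simp
    ring
  have hay : ∀ t, y'' t = 2 * k₁ / y t ^ 3 + k₂ * y t / r t ^ 3
      + k₃ * x t / (r t ^ 3 * y t) + 2 * k₃ * x t / (r t * y t ^ 3) := by
    intro t
    have h0 := (hrpos t).ne'
    have h1 := hyne t
    have hs : HasDerivAt (fun b => Real.sqrt (x t ^ 2 + b ^ 2)) (y t / r t) (y t) := by
      have h := ((hasDerivAt_pow 2 (y t)).const_add (x t ^ 2)).sqrt (hne t)
      refine h.congr_deriv ?_
      rw [← hr t]
      field_simp
      norm_num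
    have hs0 : Real.sqrt (x t ^ 2 + y t ^ 2) ≠ 0 := by rw [← hr t]; exact h0
    have hp := hasDerivAt_pow 2 (y t)
    have hd := (((hasDerivAt_const (y t) k₁).div hp (pow_ne_zero 2 h1)).add
      ((hasDerivAt_const (y t) k₂).div hs hs0)).add
      ((hasDerivAt_const (y t) (k₃ * x t)).div (hs.mul hp)
        (mul_ne_zero hs0 (pow_ne_zero 2 h1)))
    have e : (fun b => V (x t) b) = _ := funext (fun b => hV (x t) b)
    rw [heqy t, e]
    have hd' := hd.deriv
    refine (congrArg Neg.neg hd').trans ?_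
    simp only [Pi.mul_apply]
    rw [← hr t]
    field_simp
    ring
  have hLd : ∀ t, HasDerivAt L (x t * y'' t - y t * x'' t) t := by
    intro t
    have e : L = fun t => x t * y' t - y t * x' t := funext hL
    rw [e]
    refine (((hx t).mul (hy' t)).sub ((hy t).mul (hx' t))).congr_deriv ?_
    ring
  have hJd : ∀ t, HasDerivAt J 0 t := by
    intro t
    have h0 := (hrpos t).ne'
    have h1 := hyne t
    have hA := (hx' t).mul ((hLd t).pow 2)
    have hB := (((hy t).const_mul k₂).div (hrd t) h0).mul (hLd t)
    have hC := ((((hrd t).pow 2).const_mul (2 * k₁)).div ((hy t).pow 2)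
      (pow_ne_zero 2 h1)).mul (hx' t)
    have hD := ((((hx t).const_mul k₃).mul ((((hx t).pow 2).const_mul 2).add
      (((hy t).pow 2).const_mul 3))).div ((hrd t).mul ((hy t).pow 2))
      (mul_ne_zero h0 (pow_ne_zero 2 h1))).mul (hx' t)
    have hE := (((hy t).const_mul k₃).div (hrd t) h0).mul (hy' t)
    rw [funext hJ]
    refine ((((hA.sub hB).add hC).add hD).add hE).congr_deriv ?_
    simp only [Pi.add_apply, Pi.pow_apply, Pi.mul_apply, Pi.div_apply]
    rw [hax t, hay t, hL t]
    have h2 := hr2 t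
    generalize x t = a at *
    generalize y t = b at *
    generalize r t = c at *
    generalize x' t = u at *
    generalize y' t = v at *
    clear * - h0 h1 h2
    field_simp
    ring_nf
    have e3 : c ^ 3 = c * (a ^ 2 + b ^ 2) := by rw [← h2]; ring
    have e4 : c ^ 4 = (a ^ 2 + b ^ 2) ^ 2 := by rw [← h2]; ring
    have e5 : c ^ 5 = c * (a ^ 2 + b ^ 2) ^ 2 := by rw [← h2]; ring
    have e6 : c ^ 6 = (a ^ 2 + b ^ 2) ^ 3 := by rw [← h2]; ring
    have e7 : c ^ 7 = c * (a ^ 2 + b ^ 2) ^ 3 := by rw [← h2]; ring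
    simp only [h2, e3, e4, e5, e6, e7]
    ring
  intro t₁ t₂
  exact is_const_of_deriv_eq_zero (fun t => (hJd t).differentiableAt)
    (fun t => (hJd t).deriv) t₁ t₂
end

section
/- Let c₂, c₃ be real constants. Suppose x, y : ℝ → ℝ are twice differentiable with y(t) ≠ 0 for all t, and satisfy the Newtonian equations of motion for the potential V(x,y) = c₂/y² + c₃·x. Then the time-dependent cubic function J(t) = −t·x'·y'² + y·x'·y' − (2c₂/y²)·t·x' − c₃·t·y·y' + c₃·y² is constant in t. -/
theorem stmt_15 (c₂ c₃ : ℝ) (x y x' y' x'' y'' : ℝ → ℝ) (V : ℝ → ℝ → ℝ) (J : ℝ → ℝ)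
    (hV : ∀ a b : ℝ, V a b = c₂ / b ^ 2 + c₃ * a)
    (hx : ∀ t, HasDerivAt x (x' t) t)
    (hy : ∀ t, HasDerivAt y (y' t) t)
    (hx' : ∀ t, HasDerivAt x' (x'' t) t)
    (hy' : ∀ t, HasDerivAt y' (y'' t) t)
    (hyne : ∀ t, y t ≠ 0)
    (heqx : ∀ t, x'' t = - deriv (fun a => V a (y t)) (x t))
    (heqy : ∀ t, y'' t = - deriv (fun b => V (x t) b) (y t))
    (hJ : ∀ t, J t =
      -t * x' t * y' t ^ 2 + y t * x' t * y' t -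
      (2 * c₂ / y t ^ 2) * t * x' t - c₃ * t * y t * y' t + c₃ * y t ^ 2) :
    ∀ t₁ t₂ : ℝ, J t₁ = J t₂ := by
  have ex : ∀ t, x'' t = -c₃ := by
    intro t
    have h : HasDerivAt (fun a => V a (y t)) c₃ (x t) := by
      simp only [hV]
      simpa using ((hasDerivAt_id (x t)).const_mul c₃).const_add (c₂ / y t ^ 2)
    rw [heqx, h.deriv]
  have ey : ∀ t, y'' t = 2 * c₂ / y t ^ 3 := by
    intro t
    have hne := hyne t
    have h : HasDerivAt (fun b => V (x t) b) (-(2 * c₂ / y t ^ 3)) (y t) := by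
      simp only [hV]
      have h1 := (((hasDerivAt_const (y t) c₂).fun_div ((hasDerivAt_id' (y t)).fun_pow 2)
        (pow_ne_zero 2 hne)).add_const (c₃ * x t))
      refine h1.congr_deriv ?_
      field_simp
      ring
    rw [heqy, h.deriv, neg_neg]
  have key : ∀ t, HasDerivAt J 0 t := by
    intro t
    have hne := hyne t
    have hJ' : J = fun t => -t * x' t * y' t ^ 2 + y t * x' t * y' t -
      (2 * c₂ / y t ^ 2) * t * x' t - c₃ * t * y t * y' t + c₃ * y t ^ 2 := funext hJ
    rw [hJ']
    have hi := hasDerivAt_id' t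
    have d1 := (hi.fun_neg.fun_mul (hx' t)).fun_mul ((hy' t).fun_pow 2)
    have d2 := ((hy t).fun_mul (hx' t)).fun_mul (hy' t)
    have d3 := ((((hasDerivAt_const t (2 * c₂)).fun_div ((hy t).fun_pow 2)
      (pow_ne_zero 2 hne))).fun_mul hi).fun_mul (hx' t)
    have d4 := ((hi.const_mul c₃).fun_mul (hy t)).fun_mul (hy' t)
    have d5 := ((hy t).fun_pow 2).const_mul c₃
    refine ((((d1.fun_add d2).fun_sub d3).fun_sub d4).fun_add d5).congr_deriv ?_
    rw [ex t, ey t]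
    field_simp
    ring
  exact is_const_of_deriv_eq_zero (fun t => (key t).differentiableAt) (fun t => (key t).deriv)
end

section
/- Let c₁, c₂ be real constants. Suppose x, y : ℝ → ℝ are twice differentiable with x(t) > 0 for all t, and satisfy the Newtonian equations of motion for the potential V(x,y) = c₁·√x + c₂·y. Then the time-dependent cubic function J(t) = t·(c₂·x'³ + 3c₁c₂·√x·x' − (3/2)c₁²·y') − c₂·x·x'² + (3c₁²/2)·y − (8c₁c₂/3)·x^{3/2} is constant in t. -/
theorem stmt_16 (c₁ c₂ : ℝ) (x y x' y' x'' y'' : ℝ → ℝ) (V : ℝ → ℝ → ℝ) (J : ℝ → ℝ)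
    (hV : ∀ a b : ℝ, V a b = c₁ * Real.sqrt a + c₂ * b)
    (hx : ∀ t, HasDerivAt x (x' t) t)
    (hy : ∀ t, HasDerivAt y (y' t) t)
    (hx' : ∀ t, HasDerivAt x' (x'' t) t)
    (hy' : ∀ t, HasDerivAt y' (y'' t) t)
    (hxpos : ∀ t, 0 < x t)
    (heqx : ∀ t, x'' t = - deriv (fun a => V a (y t)) (x t))
    (heqy : ∀ t, y'' t = - deriv (fun b => V (x t) b) (y t))
    (hJ : ∀ t, J t =
      t * (c₂ * x' t ^ 3 + 3 * c₁ * c₂ * Real.sqrt (x t) * x' t -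
        (3 / 2) * c₁ ^ 2 * y' t) -
      c₂ * x t * x' t ^ 2 + (3 * c₁ ^ 2 / 2) * y t -
      (8 * c₁ * c₂ / 3) * x t ^ ((3 : ℝ) / 2)) :
    ∀ t₁ t₂ : ℝ, J t₁ = J t₂ := by
  have hVx : ∀ t, x'' t = - (c₁ * (1 / (2 * Real.sqrt (x t)))) := by
    intro t
    rw [heqx t]
    have h : HasDerivAt (fun a => V a (y t)) (c₁ * (1 / (2 * Real.sqrt (x t)))) (x t) := by
      have := ((Real.hasDerivAt_sqrt (hxpos t).ne').const_mul c₁).add_const (c₂ * y t)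
      simpa only [hV] using this
    rw [h.deriv]
  have hVy : ∀ t, y'' t = - c₂ := by
    intro t
    rw [heqy t]
    have h : HasDerivAt (fun b => V (x t) b) (c₂ * 1) (y t) := by
      have := ((hasDerivAt_id' (y t)).const_mul c₂).const_add (c₁ * Real.sqrt (x t))
      simpa only [hV] using this
    rw [h.deriv, mul_one]
  have hJd : ∀ t, HasDerivAt J 0 t := by
    intro t
    have hJ' : J = fun t => t * (c₂ * x' t ^ 3 + 3 * c₁ * c₂ * Real.sqrt (x t) * x' t -
        (3 / 2) * c₁ ^ 2 * y' t) -
      c₂ * x t * x' t ^ 2 + (3 * c₁ ^ 2 / 2) * y t -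
      (8 * c₁ * c₂ / 3) * x t ^ ((3 : ℝ) / 2) := funext hJ
    rw [hJ']
    have hs := (hx t).sqrt (hxpos t).ne'
    have hr := (hx t).rpow_const (p := (3 : ℝ) / 2) (Or.inl (hxpos t).ne')
    have h := (((((hasDerivAt_id' t).fun_mul
      (((((hx' t).fun_pow 3).const_mul c₂).fun_add
        ((hs.const_mul (3 * c₁ * c₂)).fun_mul (hx' t))).fun_sub
        ((hy' t).const_mul ((3 / 2) * c₁ ^ 2)))).fun_sub
      (((hx t).const_mul c₂).fun_mul ((hx' t).fun_pow 2))).fun_add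
      ((hy t).const_mul (3 * c₁ ^ 2 / 2))).fun_sub
      (hr.const_mul (8 * c₁ * c₂ / 3)))
    refine h.congr_deriv ?_
    have hsp : 0 < Real.sqrt (x t) := Real.sqrt_pos.mpr (hxpos t)
    have hxs : x t = Real.sqrt (x t) ^ 2 := (Real.sq_sqrt (hxpos t).le).symm
    have hp : x t ^ ((3 : ℝ) / 2 - 1) = Real.sqrt (x t) := by
      rw [Real.sqrt_eq_rpow]; norm_num
    rw [hp, hVx, hVy]
    generalize Real.sqrt (x t) = s at *
    rw [hxs]
    field_simp
    push_cast
    ring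
  exact is_const_of_deriv_eq_zero (fun t => (hJd t).differentiableAt) (fun t => (hJd t).deriv)
end

section
/- Let k be a real constant. Suppose x, y : ℝ → ℝ are twice differentiable with x(t) > 0 and y(t) > 0 for all t, and satisfy the Newtonian equations of motion for the potential V(x,y) = k(√x + √y). Then the time-dependent cubic function J(t) = t·(x'³ − y'³ + 3k·√x·x' − 3k·√y·y') − x·x'² + y·y'² − (8k/3)·x^{3/2} + (8k/3)·y^{3/2} is constant in t. -/
/-- The one-dimensional part of the integral has derivative `-(3k²/2) t`. -/
theorem aux_one (k : ℝ) (x x' x'' : ℝ → ℝ)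
    (hx : ∀ t, HasDerivAt x (x' t) t)
    (hx' : ∀ t, HasDerivAt x' (x'' t) t)
    (hxpos : ∀ t, 0 < x t)
    (heq : ∀ t, x'' t = - (k * (1 / (2 * Real.sqrt (x t))))) (t : ℝ) :
    HasDerivAt (fun t => t * (x' t ^ 3 + 3 * k * Real.sqrt (x t) * x' t) -
      x t * x' t ^ 2 - (8 * k / 3) * x t ^ ((3 : ℝ) / 2)) (-(3 * k ^ 2 / 2) * t) t := by
  have hs : HasDerivAt (fun t => Real.sqrt (x t)) (x' t / (2 * Real.sqrt (x t))) t :=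
    (hx t).sqrt (hxpos t).ne'
  have hr : HasDerivAt (fun t => x t ^ ((3 : ℝ) / 2)) (3 / 2 * Real.sqrt (x t) * x' t) t := by
    have h := (hx t).rpow_const (p := (3 : ℝ) / 2) (Or.inl (hxpos t).ne')
    convert h using 1
    rw [Real.sqrt_eq_rpow, show (3 : ℝ) / 2 - 1 = 1 / 2 by norm_num]
    ring
  have h := (((hasDerivAt_id' t).mul (((hx' t).pow 3).add ((hs.const_mul (3 * k)).mul (hx' t)))).sub
    ((hx t).mul ((hx' t).pow 2))).sub (hr.const_mul (8 * k / 3))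
  refine h.congr_deriv ?_
  have hsp : 0 < Real.sqrt (x t) := Real.sqrt_pos.2 (hxpos t)
  have hsq : x t = Real.sqrt (x t) ^ 2 := (Real.sq_sqrt (hxpos t).le).symm
  simp only [Pi.add_apply, Pi.mul_apply, Pi.pow_apply, heq t]
  generalize Real.sqrt (x t) = s at *
  rw [hsq]
  field_simp
  push_cast
  ring

theorem stmt_17 (k : ℝ) (x y x' y' x'' y'' : ℝ → ℝ) (V : ℝ → ℝ → ℝ) (J : ℝ → ℝ)
    (hV : ∀ a b : ℝ, V a b = k * (Real.sqrt a + Real.sqrt b))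
    (hx : ∀ t, HasDerivAt x (x' t) t)
    (hy : ∀ t, HasDerivAt y (y' t) t)
    (hx' : ∀ t, HasDerivAt x' (x'' t) t)
    (hy' : ∀ t, HasDerivAt y' (y'' t) t)
    (hxpos : ∀ t, 0 < x t)
    (hypos : ∀ t, 0 < y t)
    (heqx : ∀ t, x'' t = - deriv (fun a => V a (y t)) (x t))
    (heqy : ∀ t, y'' t = - deriv (fun b => V (x t) b) (y t))
    (hJ : ∀ t, J t =
      t * (x' t ^ 3 - y' t ^ 3 + 3 * k * Real.sqrt (x t) * x' t -
        3 * k * Real.sqrt (y t) * y' t) -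
      x t * x' t ^ 2 + y t * y' t ^ 2 -
      (8 * k / 3) * x t ^ ((3 : ℝ) / 2) + (8 * k / 3) * y t ^ ((3 : ℝ) / 2)) :
    ∀ t₁ t₂ : ℝ, J t₁ = J t₂ := by
  have hx2 : ∀ t, x'' t = - (k * (1 / (2 * Real.sqrt (x t)))) := by
    intro t
    rw [heqx t]
    simp only [hV]
    rw [(((Real.hasDerivAt_sqrt (hxpos t).ne').add_const _).const_mul k).deriv]
  have hy2 : ∀ t, y'' t = - (k * (1 / (2 * Real.sqrt (y t)))) := by
    intro t
    rw [heqy t]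
    simp only [hV]
    rw [(((Real.hasDerivAt_sqrt (hypos t).ne').const_add _).const_mul k).deriv]
  have hd : ∀ t, HasDerivAt J 0 t := by
    intro t
    have h := (aux_one k x x' x'' hx hx' hxpos hx2 t).sub (aux_one k y y' y'' hy hy' hypos hy2 t)
    rw [sub_self] at h
    refine h.congr_of_eventuallyEq (Filter.Eventually.of_forall fun u => ?_)
    simp only [Pi.sub_apply, hJ]
    ring
  exact is_const_of_deriv_eq_zero (fun t => (hd t).differentiableAt) (fun t => (hd t).deriv)
end

section
/- Let c₂, c₃ be real constants. Suppose x, y : ℝ → ℝ are twice differentiable with x(t) ≠ 0 and y(t) ≠ 0 for all t, and satisfy the Newtonian equations of motion for the potential V(x,y) = c₂/x² + c₃/y². Then the time-dependent cubic function J(t) = t·(y·x'²·y' − x·x'·y'² − 2c₃·(x/y²)·x' + 2c₂·(y/x²)·y') − 2y²·x'² − x²·y'² + 3xy·x'·y' − 4c₂·y²/x² − 2c₃·x²/y² is constant in t. -/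
theorem stmt_18 (c₂ c₃ : ℝ) (x y x' y' x'' y'' : ℝ → ℝ) (V : ℝ → ℝ → ℝ) (J : ℝ → ℝ)
    (hV : ∀ a b : ℝ, V a b = c₂ / a ^ 2 + c₃ / b ^ 2)
    (hx : ∀ t, HasDerivAt x (x' t) t)
    (hy : ∀ t, HasDerivAt y (y' t) t)
    (hx' : ∀ t, HasDerivAt x' (x'' t) t)
    (hy' : ∀ t, HasDerivAt y' (y'' t) t)
    (hxne : ∀ t, x t ≠ 0)
    (hyne : ∀ t, y t ≠ 0)
    (heqx : ∀ t, x'' t = - deriv (fun a => V a (y t)) (x t))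
    (heqy : ∀ t, y'' t = - deriv (fun b => V (x t) b) (y t))
    (hJ : ∀ t, J t =
      t * (y t * x' t ^ 2 * y' t - x t * x' t * y' t ^ 2 -
        2 * c₃ * (x t / y t ^ 2) * x' t + 2 * c₂ * (y t / x t ^ 2) * y' t) -
      2 * y t ^ 2 * x' t ^ 2 - x t ^ 2 * y' t ^ 2 + 3 * x t * y t * x' t * y' t -
      4 * c₂ * y t ^ 2 / x t ^ 2 - 2 * c₃ * x t ^ 2 / y t ^ 2) :
    ∀ t₁ t₂ : ℝ, J t₁ = J t₂ := by
  have ex : ∀ t, x'' t = 2 * c₂ / x t ^ 3 := by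
    intro t
    have h0 := hxne t
    have h : HasDerivAt (fun a => V a (y t)) (-(2 * c₂ / x t ^ 3)) (x t) := by
      simp only [hV]
      have := (((hasDerivAt_const (x t) c₂).div ((hasDerivAt_id (x t)).pow 2)
        (pow_ne_zero 2 h0)).add_const (c₃ / y t ^ 2))
      refine this.congr_deriv ?_
      simp
      field_simp
    rw [heqx, h.deriv, neg_neg]
  have ey : ∀ t, y'' t = 2 * c₃ / y t ^ 3 := by
    intro t
    have h0 := hyne t
    have h : HasDerivAt (fun b => V (x t) b) (-(2 * c₃ / y t ^ 3)) (y t) := by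
      simp only [hV]
      have := (((hasDerivAt_const (y t) c₃).div ((hasDerivAt_id (y t)).pow 2)
        (pow_ne_zero 2 h0)).const_add (c₂ / x t ^ 2))
      refine this.congr_deriv ?_
      simp
      field_simp
    rw [heqy, h.deriv, neg_neg]
  have key : ∀ t, HasDerivAt J 0 t := by
    intro t
    have h0 := hxne t
    have h1 := hyne t
    have X := hx t
    have Y := hy t
    have X' := hx' t
    have Y' := hy' t
    have hxx := pow_ne_zero 2 h0
    have hyy := pow_ne_zero 2 h1
    have hJ' := funext hJ
    rw [hJ']
    have A := (((((Y.mul (X'.pow 2)).mul Y').sub ((X.mul X').mul (Y'.pow 2))).sub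
      (((X.div (Y.pow 2) hyy).const_mul (2 * c₃)).mul X')).add
      (((Y.div (X.pow 2) hxx).const_mul (2 * c₂)).mul Y'))
    have B := ((((((hasDerivAt_id t).mul A).sub (((Y.pow 2).const_mul 2).mul (X'.pow 2))).sub
      ((X.pow 2).mul (Y'.pow 2))).add ((((X.const_mul 3).mul Y).mul X').mul Y')).sub
      (((Y.pow 2).const_mul (4 * c₂)).div (X.pow 2) hxx)).sub
      (((X.pow 2).const_mul (2 * c₃)).div (Y.pow 2) hyy)
    refine B.congr_deriv ?_
    simp [ex, ey]
    field_simp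
    ring
  intro t₁ t₂
  exact is_const_of_deriv_eq_zero (fun t => (key t).differentiableAt)
    (fun t => (key t).deriv) t₁ t₂
end

section
/- Let λ ≠ 0 and k be real constants and write r² = x² + y². Suppose x, y : ℝ → ℝ are twice differentiable with x(t)² + y(t)² > 0 for all t, and satisfy the Newtonian equations of motion for the potential V(x,y) = −(λ²/8)·r² + k/r². Then the exponentially time-dependent cubic function I(t) = e^{λt}·(x·y' − y·x')·[x'² + y'² − λ(x·x' + y·y') + (λ²/4)·r² + 2k/r²] is constant in t; moreover the quadratic factor Q(t) = e^{λt}·[x'² + y'² − λ(x·x' + y·y') + (λ²/4)·r² + 2k/r²] is itself constant in t. -/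
theorem stmt_19 (lam k : ℝ) (hlam : lam ≠ 0)
    (x y x' y' x'' y'' : ℝ → ℝ) (V : ℝ → ℝ → ℝ) (I Q : ℝ → ℝ)
    (hV : ∀ a b : ℝ, V a b = -(lam ^ 2 / 8) * (a ^ 2 + b ^ 2) + k / (a ^ 2 + b ^ 2))
    (hx : ∀ t, HasDerivAt x (x' t) t)
    (hy : ∀ t, HasDerivAt y (y' t) t)
    (hx' : ∀ t, HasDerivAt x' (x'' t) t)
    (hy' : ∀ t, HasDerivAt y' (y'' t) t)
    (hpos : ∀ t, 0 < x t ^ 2 + y t ^ 2)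
    (heqx : ∀ t, x'' t = - deriv (fun a => V a (y t)) (x t))
    (heqy : ∀ t, y'' t = - deriv (fun b => V (x t) b) (y t))
    (hQ : ∀ t, Q t = Real.exp (lam * t) *
      (x' t ^ 2 + y' t ^ 2 - lam * (x t * x' t + y t * y' t) +
        (lam ^ 2 / 4) * (x t ^ 2 + y t ^ 2) + 2 * k / (x t ^ 2 + y t ^ 2)))
    (hI : ∀ t, I t = Real.exp (lam * t) * (x t * y' t - y t * x' t) *
      (x' t ^ 2 + y' t ^ 2 - lam * (x t * x' t + y t * y' t) +
        (lam ^ 2 / 4) * (x t ^ 2 + y t ^ 2) + 2 * k / (x t ^ 2 + y t ^ 2))) :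
    (∀ t₁ t₂ : ℝ, I t₁ = I t₂) ∧ (∀ t₁ t₂ : ℝ, Q t₁ = Q t₂) := by
  have hax : ∀ t, x'' t = lam ^ 2 / 4 * x t + 2 * k * x t / (x t ^ 2 + y t ^ 2) ^ 2 := by
    intro t
    have hne := (hpos t).ne'
    have h1 : HasDerivAt (fun a : ℝ => a ^ 2 + y t ^ 2) (2 * x t) (x t) := by
      simpa using (hasDerivAt_pow 2 (x t)).add_const (y t ^ 2)
    have h2 := (h1.const_mul (-(lam ^ 2 / 8))).add ((hasDerivAt_const (x t) k).div h1 hne)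
    have h3 : HasDerivAt (fun a => V a (y t)) _ (x t) :=
      h2.congr_of_eventuallyEq (Filter.Eventually.of_forall fun a => by simp [hV])
    rw [heqx t, h3.deriv]
    field_simp
    ring
  have hay : ∀ t, y'' t = lam ^ 2 / 4 * y t + 2 * k * y t / (x t ^ 2 + y t ^ 2) ^ 2 := by
    intro t
    have hne := (hpos t).ne'
    have h1 : HasDerivAt (fun a : ℝ => x t ^ 2 + a ^ 2) (2 * y t) (y t) := by
      simpa using (hasDerivAt_pow 2 (y t)).const_add (x t ^ 2)
    have h2 := (h1.const_mul (-(lam ^ 2 / 8))).add ((hasDerivAt_const (y t) k).div h1 hne)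
    have h3 : HasDerivAt (fun b => V (x t) b) _ (y t) :=
      h2.congr_of_eventuallyEq (Filter.Eventually.of_forall fun a => by simp [hV])
    rw [heqy t, h3.deriv]
    field_simp
    ring
  have hLd : ∀ t, HasDerivAt (fun t => x t * y' t - y t * x' t) 0 t := by
    intro t
    refine (((hx t).mul (hy' t)).sub ((hy t).mul (hx' t))).congr_deriv ?_
    rw [hax, hay]
    ring
  have hQd : ∀ t, HasDerivAt Q 0 t := by
    intro t
    have hne := (hpos t).ne'
    have hr : HasDerivAt (fun t => x t ^ 2 + y t ^ 2) (2 * x t * x' t + 2 * y t * y' t) t := by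
      exact (((hx t).pow 2).add ((hy t).pow 2)).congr_deriv (by simp)
    have hv : HasDerivAt (fun t => x' t ^ 2 + y' t ^ 2)
        (2 * x' t * x'' t + 2 * y' t * y'' t) t := by
      exact (((hx' t).pow 2).add ((hy' t).pow 2)).congr_deriv (by simp)
    have he : HasDerivAt (fun t => Real.exp (lam * t)) (Real.exp (lam * t) * lam) t := by
      simpa using ((hasDerivAt_id t).const_mul lam).exp
    have hm := (((hx t).mul (hx' t)).add ((hy t).mul (hy' t))).const_mul lam
    have h := he.mul (((hv.sub hm).add (hr.const_mul (lam ^ 2 / 4))).add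
      ((hasDerivAt_const t (2 * k)).div hr hne))
    refine (h.congr_of_eventuallyEq
      (Filter.Eventually.of_forall fun a => by simp [hQ])).congr_deriv ?_
    simp only [Pi.add_apply, Pi.sub_apply, Pi.mul_apply, Pi.div_apply]
    rw [hax, hay]
    field_simp
    ring
  have hQc : ∀ t₁ t₂ : ℝ, Q t₁ = Q t₂ :=
    is_const_of_deriv_eq_zero (fun t => (hQd t).differentiableAt) (fun t => (hQd t).deriv)
  have hLc : ∀ t₁ t₂ : ℝ, x t₁ * y' t₁ - y t₁ * x' t₁ = x t₂ * y' t₂ - y t₂ * x' t₂ :=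
    is_const_of_deriv_eq_zero (f := fun t => x t * y' t - y t * x' t)
      (fun t => (hLd t).differentiableAt) (fun t => (hLd t).deriv)
  have hIQ : ∀ t, I t = (x t * y' t - y t * x' t) * Q t := by
    intro t
    rw [hI, hQ]
    ring
  exact ⟨fun t₁ t₂ => by rw [hIQ, hIQ, hLc t₁ t₂, hQc t₁ t₂], hQc⟩
end
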